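/- arXiv:1611.09338 — 2 statements merged into one kernel-verified Lean document; each statement's English description precedes it below -/
import Mathlib

section
/- Let s ≥ 2, M ∈ ℕ, and for each nonzero ε ∈ {0,1}^s let a_ε : [1,(s+1)M] → ℂ be bounded by 1. Then 𝔼_{m∈[M]} |𝔼_{h∈[M]^s} ∏_{ε≠0} a_ε(m + ε·h)| ≤ C_s ( min_{ε≠0} ‖a_ε‖_{U^s(ℤ_{(s+1)M})}^{1/(s+1)} + 1/M ), where C_s = (s+1)^{s+1}((2s)^s + 1). -/
open Finset

/-- Gowers uniformity norm `U^s(ℤ_L)` of the `L`-periodic sequence `n ↦ a (n % L)`. -/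
noncomputable def gowersNorm (L : ℕ) : ℕ → (ℕ → ℂ) → ℝ
  | 0, _ => 0
  | 1, a => ‖(L : ℂ)⁻¹ * ∑ m ∈ Finset.range L, a (m % L)‖
  | (s + 2), a =>
      ((L : ℝ)⁻¹ * ∑ h ∈ Finset.range L,
        gowersNorm L (s + 1)
          (fun n => a ((n + h) % L) * (starRingEnd ℂ) (a (n % L))) ^ (2 ^ (s + 1)))
        ^ (((2 : ℝ) ^ (s + 2))⁻¹)

/-- `ε · h = ∑ j, ε j * h j`. -/
def epsDot {s : ℕ} (ε : Fin s → Bool) (h : Fin s → ℕ) : ℕ := ∑ j, if ε j then h j else 0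


section SIG
variable {L : ℕ} [NeZero L]

def gDot {s : ℕ} (ε : Fin s → Bool) (h : Fin s → ZMod L) : ZMod L :=
  ∑ j, if ε j then h j else 0

noncomputable def nG (s : ℕ) (f : ZMod L → ℂ) : ℝ := gowersNorm L s (fun n : ℕ => f (n : ZMod L))

lemma sum_range_zmod {α : Type*} [AddCommMonoid α] (g : ZMod L → α) :
    ∑ n ∈ Finset.range L, g (n : ZMod L) = ∑ x, g x := by
  refine Finset.sum_bij' (fun n _ => (n : ZMod L)) (fun x _ => x.val) ?_ ?_ ?_ ?_ ?_
  · intro a _; exact Finset.mem_univ _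
  · intro a _; exact Finset.mem_range.2 (ZMod.val_lt a)
  · intro a ha; exact ZMod.val_cast_of_lt (Finset.mem_range.1 ha)
  · intro a _; simp
  · intro a _; rfl

lemma nG_one (f : ZMod L → ℂ) : nG 1 f = ‖(L : ℂ)⁻¹ * ∑ x, f x‖ := by
  simp only [nG, gowersNorm, ZMod.natCast_mod]
  rw [sum_range_zmod]

lemma nG_succ (s : ℕ) (f : ZMod L → ℂ) : nG (s + 2) f =
    ((L : ℝ)⁻¹ * ∑ k : ZMod L,
      nG (s + 1) (fun x => f (x + k) * (starRingEnd ℂ) (f x)) ^ (2 ^ (s + 1)))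
        ^ (((2 : ℝ) ^ (s + 2))⁻¹) := by
  simp only [nG, gowersNorm, ZMod.natCast_mod]
  rw [← sum_range_zmod]
  simp

lemma nG_nonneg (s : ℕ) (f : ZMod L → ℂ) : 0 ≤ nG (s + 1) f := by
  induction s generalizing f with
  | zero => rw [nG_one]; positivity
  | succ s ih =>
    rw [nG_succ]
    apply Real.rpow_nonneg
    apply mul_nonneg (by positivity)
    exact Finset.sum_nonneg fun k _ => pow_nonneg (ih _) _

lemma avg_le_one (g : ZMod L → ℝ) (hg : ∀ x, g x ≤ 1) : (L : ℝ)⁻¹ * ∑ x, g x ≤ 1 := by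
  have h1 : ∑ x, g x ≤ L := by
    calc ∑ x, g x ≤ ∑ x : ZMod L, (1 : ℝ) := Finset.sum_le_sum fun x _ => hg x
      _ = L := by simp [ZMod.card]
  have hL : (0 : ℝ) < L := by exact_mod_cast Nat.pos_of_ne_zero (NeZero.ne L)
  rw [inv_mul_le_iff₀ hL]; simpa using h1

lemma nG_le_one (s : ℕ) (f : ZMod L → ℂ) (hf : ∀ x, ‖f x‖ ≤ 1) : nG (s + 1) f ≤ 1 := by
  induction s generalizing f with
  | zero =>
    rw [nG_one, norm_mul, norm_inv, Complex.norm_natCast]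
    refine le_trans ?_ (avg_le_one (fun x => ‖f x‖) hf)
    gcongr
    exact norm_sum_le _ _
  | succ s ih =>
    rw [nG_succ]
    apply Real.rpow_le_one
    · apply mul_nonneg (by positivity)
      exact Finset.sum_nonneg fun k _ => pow_nonneg (nG_nonneg _ _) _
    · apply avg_le_one
      intro k
      apply pow_le_one₀ (nG_nonneg _ _)
      apply ih
      intro x
      rw [norm_mul, RCLike.norm_conj]
      exact mul_le_one₀ (hf _) (norm_nonneg _) (hf _)
    · positivity

/-- Hölder step. -/
lemma avg_le_nG_sq (s : ℕ) (f : ZMod L → ℂ) :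
    ∑ k : ZMod L, nG (s + 1) (fun x => f (x + k) * (starRingEnd ℂ) (f x))
      ≤ L * nG (s + 2) f ^ 2 := by
  have hL : (0 : ℝ) < L := by exact_mod_cast Nat.pos_of_ne_zero (NeZero.ne L)
  set g : ZMod L → ℝ := fun k => nG (s + 1) (fun x => f (x + k) * (starRingEnd ℂ) (f x)) with hgdef
  have hg : ∀ k, 0 ≤ g k := fun k => nG_nonneg _ _
  have h1 : ((L : ℝ)⁻¹ * ∑ k, g k) ^ (2 ^ (s + 1)) ≤ (L : ℝ)⁻¹ * ∑ k, g k ^ (2 ^ (s + 1)) := by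
    have h3 := Real.pow_arith_mean_le_arith_mean_pow (Finset.univ : Finset (ZMod L))
      (fun _ => (L : ℝ)⁻¹) g (fun _ _ => by positivity) (by simp [ZMod.card, hL.ne'])
      (fun k _ => hg k) (2 ^ (s + 1))
    simpa [Finset.mul_sum] using h3
  have h4 : nG (s + 2) f ^ 2 =
      ((L : ℝ)⁻¹ * ∑ k, g k ^ (2 ^ (s + 1))) ^ ((((2 : ℝ) ^ (s + 1)))⁻¹) := by
    rw [nG_succ, ← Real.rpow_natCast, ← Real.rpow_mul]
    · congr 1
      rw [pow_succ]; push_cast; field_simp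
    · apply mul_nonneg (by positivity)
      exact Finset.sum_nonneg fun k _ => pow_nonneg (nG_nonneg _ _) _
  have h5 : (L : ℝ)⁻¹ * ∑ k, g k ≤ nG (s + 2) f ^ 2 := by
    rw [h4]
    have h0 : 0 ≤ (L : ℝ)⁻¹ * ∑ k, g k :=
      mul_nonneg (by positivity) (Finset.sum_nonneg fun k _ => hg k)
    calc (L : ℝ)⁻¹ * ∑ k, g k
        = (((L : ℝ)⁻¹ * ∑ k, g k) ^ (2 ^ (s + 1))) ^ ((((2 : ℝ) ^ (s + 1)))⁻¹) := by
          have := Real.pow_rpow_inv_natCast h0 (n := 2 ^ (s + 1)) (by positivity)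
          push_cast at this
          exact this.symm
      _ ≤ _ := Real.rpow_le_rpow (by positivity) h1 (by positivity)
  rwa [inv_mul_le_iff₀ hL] at h5

lemma gDot_cons {s : ℕ} (b : Bool) (ε : Fin s → Bool) (k : ZMod L) (h : Fin s → ZMod L) :
    gDot (Fin.cons b ε : Fin (s + 1) → Bool) (Fin.cons k h : Fin (s + 1) → ZMod L)
      = (if b then k else 0) + gDot ε h := by
  simp [gDot, Fin.sum_univ_succ]

lemma fsum_cons {s : ℕ} {X α : Type*} [Fintype X] [AddCommMonoid α] (g : (Fin (s + 1) → X) → α) :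
    ∑ h, g h = ∑ k : X, ∑ h : Fin s → X, g (Fin.cons k h) := by
  rw [← Fintype.sum_prod_type']
  exact (Fintype.sum_equiv (Fin.consEquiv (fun _ : Fin (s + 1) => X)) _ _ (fun _ => rfl)).symm

lemma fprod_cons {s : ℕ} {X α : Type*} [Fintype X] [DecidableEq X] [CommMonoid α]
    (g : (Fin (s + 1) → X) → α) :
    ∏ h, g h = ∏ k : X, ∏ h : Fin s → X, g (Fin.cons k h) := by
  rw [← Fintype.prod_prod_type']
  exact (Fintype.prod_equiv (Fin.consEquiv (fun _ : Fin (s + 1) => X)) _ _ (fun _ => rfl)).symm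

lemma norm_sum_le_L (g : ZMod L → ℂ) (hg : ∀ x, ‖g x‖ ≤ 1) : ‖∑ x, g x‖ ≤ L := by
  calc ‖∑ x, g x‖ ≤ ∑ x, ‖g x‖ := norm_sum_le _ _
    _ ≤ ∑ x : ZMod L, (1 : ℝ) := Finset.sum_le_sum fun x _ => hg x
    _ = L := by simp [ZMod.card]

lemma norm_prod_le_one' {ι : Type*} (t : Finset ι) (g : ι → ℂ) (hg : ∀ x, ‖g x‖ ≤ 1) :
    ‖∏ x ∈ t, g x‖ ≤ 1 := by
  rw [norm_prod]
  exact Finset.prod_le_one (fun _ _ => norm_nonneg _) (fun x _ => hg x)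

/-- splitting the first coordinate -/
lemma split_first {s : ℕ} (f : (Fin (s + 1) → Bool) → ZMod L → ℂ) :
    ∑ x, ∑ h : Fin (s + 1) → ZMod L, ∏ ε, f ε (x + gDot ε h) =
    ∑ h : Fin s → ZMod L,
      (∑ x, ∏ ε : Fin s → Bool, f (Fin.cons false ε) (x + gDot ε h)) *
      (∑ x, ∏ ε : Fin s → Bool, f (Fin.cons true ε) (x + gDot ε h)) := by
  simp only [fsum_cons (X := ZMod L), fprod_cons (X := Bool), gDot_cons, Fintype.prod_bool]
  have : ∀ x : ZMod L, (∑ k : ZMod L, ∑ h : Fin s → ZMod L,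
      (∏ ε : Fin s → Bool, f (Fin.cons true ε) (x + ((if true = true then k else 0) + gDot ε h))) *
      ∏ ε : Fin s → Bool, f (Fin.cons false ε) (x + ((if false = true then k else 0) + gDot ε h)))
      = ∑ h : Fin s → ZMod L, (∏ ε : Fin s → Bool, f (Fin.cons false ε) (x + gDot ε h)) *
      (∑ y, ∏ ε : Fin s → Bool, f (Fin.cons true ε) (y + gDot ε h)) := by
    intro x
    rw [Finset.sum_comm]
    refine Finset.sum_congr rfl fun h _ => ?_
    simp only [if_true, Bool.false_eq_true, if_false, zero_add]
    rw [← Finset.sum_mul, mul_comm]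
    congr 1
    refine Fintype.sum_equiv (Equiv.addLeft x) _ _ fun k => ?_
    simp [add_assoc]
  refine (Finset.sum_congr rfl fun x _ => this x).trans ?_
  rw [Finset.sum_comm]
  simp_rw [Finset.sum_mul]

lemma norm_sq_sum (g : ZMod L → ℂ) :
    ((‖∑ x, g x‖ ^ 2 : ℝ) : ℂ) = ∑ k, ∑ x, g (x + k) * (starRingEnd ℂ) (g x) := by
  rw [Finset.sum_comm]
  have : ∀ x : ZMod L, ∑ k, g (x + k) * (starRingEnd ℂ) (g x)
      = (∑ y, g y) * (starRingEnd ℂ) (g x) := by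
    intro x
    rw [← Finset.sum_mul]
    congr 1
    exact Fintype.sum_equiv (Equiv.addLeft x) _ _ fun k => rfl
  simp_rw [this]
  rw [← Finset.mul_sum, ← map_sum, Complex.mul_conj, Complex.normSq_eq_norm_sq]

lemma gcs_aux (s : ℕ) (f : (Fin (s + 1) → Bool) → ZMod L → ℂ) (hf : ∀ ε x, ‖f ε x‖ ≤ 1)
    (b : Bool) :
    ‖∑ x, ∑ h : Fin (s + 1) → ZMod L, ∏ ε, f ε (x + gDot ε h)‖
      ≤ L * ∑ h : Fin s → ZMod L,
        ‖∑ x, ∏ ε : Fin s → Bool, f (Fin.cons b ε) (x + gDot ε h)‖ := by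
  rw [split_first]
  set Z : Bool → (Fin s → ZMod L) → ℂ := fun b h =>
    ∑ x, ∏ ε : Fin s → Bool, f (Fin.cons b ε) (x + gDot ε h) with hZ
  have hZ1 : ∀ b h, ‖Z b h‖ ≤ L := fun b h =>
    norm_sum_le_L _ fun x => norm_prod_le_one' _ _ fun ε => hf _ _
  change ‖∑ h, Z false h * Z true h‖ ≤ L * ∑ h, ‖Z b h‖
  rw [Finset.mul_sum]
  refine (norm_sum_le _ _).trans (Finset.sum_le_sum fun h _ => ?_)
  rw [norm_mul]
  cases b
  · rw [mul_comm]; exact mul_le_mul_of_nonneg_right (hZ1 _ _) (norm_nonneg _)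
  · exact mul_le_mul_of_nonneg_right (hZ1 _ _) (norm_nonneg _)

theorem gcs (s : ℕ) (f : (Fin (s + 1) → Bool) → ZMod L → ℂ) (hf : ∀ ε x, ‖f ε x‖ ≤ 1)
    (e : Fin (s + 1) → Bool) :
    ‖∑ x, ∑ h : Fin (s + 1) → ZMod L, ∏ ε, f ε (x + gDot ε h)‖
      ≤ (L : ℝ) ^ (s + 2) * nG (s + 1) (f e) := by
  have hL : (0 : ℝ) < L := by exact_mod_cast Nat.pos_of_ne_zero (NeZero.ne L)
  induction s with
  | zero =>
    obtain ⟨b, e', rfl⟩ : ∃ b e', e = (Fin.cons b e' : Fin (0 + 1) → Bool) :=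
      ⟨e 0, Fin.tail e, (Fin.cons_self_tail e).symm⟩
    refine (gcs_aux 0 f hf b).trans ?_
    rw [nG_one]
    have hd : ∀ (ε : Fin 0 → Bool) (h : Fin 0 → ZMod L), gDot ε h = 0 := by
      intro ε h; simp [gDot]
    have he : e' = default := Subsingleton.elim _ _
    simp only [hd, add_zero, Fintype.sum_unique, Fintype.prod_unique, norm_mul, norm_inv,
      Complex.norm_natCast, he, zero_add]
    apply le_of_eq
    field_simp
    congr! 3
    congr 1
    exact Subsingleton.elim _ _
  | succ s ih =>
    obtain ⟨b, e', rfl⟩ : ∃ b e', e = (Fin.cons b e' : Fin (s + 1 + 1) → Bool) :=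
      ⟨e 0, Fin.tail e, (Fin.cons_self_tail e).symm⟩
    refine (gcs_aux (s + 1) f hf b).trans ?_
    set g : (Fin (s + 1) → Bool) → ZMod L → ℂ := fun ε => f (Fin.cons b ε) with hg
    set Y : (Fin (s + 1) → ZMod L) → ℂ := fun h => ∑ x, ∏ ε, g ε (x + gDot ε h) with hY
    change L * ∑ h, ‖Y h‖ ≤ (L : ℝ) ^ (s + 1 + 2) * nG (s + 2) (g e')
    have hdiff : ∑ h, ‖Y h‖ ^ 2 ≤ (L : ℝ) ^ (s + 3) * nG (s + 2) (g e') ^ 2 := by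
      have h1 : ((∑ h, ‖Y h‖ ^ 2 : ℝ) : ℂ) = ∑ k : ZMod L, ∑ x, ∑ h : Fin (s + 1) → ZMod L,
          ∏ ε, (fun ε x => g ε (x + k) * (starRingEnd ℂ) (g ε x)) ε (x + gDot ε h) := by
        rw [Complex.ofReal_sum]
        simp_rw [hY, norm_sq_sum, map_prod, ← Finset.prod_mul_distrib]
        rw [Finset.sum_comm]
        refine Finset.sum_congr rfl fun k _ => ?_
        rw [Finset.sum_comm]
        refine Finset.sum_congr rfl fun x _ => ?_
        refine Finset.sum_congr rfl fun h _ => ?_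
        refine Finset.prod_congr rfl fun ε _ => ?_
        rw [add_right_comm]
      have h0 : 0 ≤ ∑ h, ‖Y h‖ ^ 2 := Finset.sum_nonneg fun _ _ => by positivity
      calc ∑ h, ‖Y h‖ ^ 2 = ‖((∑ h, ‖Y h‖ ^ 2 : ℝ) : ℂ)‖ := by
            rw [Complex.norm_real, Real.norm_of_nonneg h0]
        _ ≤ ∑ k : ZMod L, (L : ℝ) ^ (s + 2) *
              nG (s + 1) (fun x => g e' (x + k) * (starRingEnd ℂ) (g e' x)) := by
            rw [h1]
            refine (norm_sum_le _ _).trans (Finset.sum_le_sum fun k _ => ?_)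
            apply ih (fun ε x => g ε (x + k) * (starRingEnd ℂ) (g ε x))
            intro ε x
            rw [norm_mul, RCLike.norm_conj]
            exact mul_le_one₀ (hf _ _) (norm_nonneg _) (hf _ _)
        _ ≤ (L : ℝ) ^ (s + 2) * (L * nG (s + 2) (g e') ^ 2) := by
            rw [← Finset.mul_sum]
            exact mul_le_mul_of_nonneg_left (avg_le_nG_sq _ _) (by positivity)
        _ = _ := by ring
    have hcs : (∑ h, ‖Y h‖) ^ 2 ≤ (L : ℝ) ^ (s + 1) * ∑ h, ‖Y h‖ ^ 2 := by
      have := sq_sum_le_card_mul_sum_sq (s := (Finset.univ : Finset (Fin (s + 1) → ZMod L)))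
        (f := fun h => ‖Y h‖)
      simpa [ZMod.card] using this
    have hn : 0 ≤ nG (s + 2) (g e') := nG_nonneg _ _
    apply (pow_le_pow_iff_left₀ (by positivity) (by positivity) two_ne_zero).1 ?_
    calc (L * ∑ h, ‖Y h‖) ^ 2 = (L : ℝ) ^ 2 * (∑ h, ‖Y h‖) ^ 2 := by ring
      _ ≤ (L : ℝ) ^ 2 * ((L : ℝ) ^ (s + 1) * ((L : ℝ) ^ (s + 3) * nG (s + 2) (g e') ^ 2)) := by
          gcongr
          exact hcs.trans (by gcongr)
      _ = _ := by ring

lemma exists_eta {s : ℕ} (hs : 2 ≤ s) (e : Fin s → Bool) (j : Fin s) :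
    ∃ η : Fin s → Bool, η j = false ∧ η ≠ e ∧ Function.update η j true ≠ e := by
  have : Nontrivial (Fin s) := Fin.nontrivial_iff_two_le.2 hs
  obtain ⟨k, hk⟩ := exists_ne j
  refine ⟨fun i => if i = k then !(e k) else false, by simp [hk.symm], ?_, ?_⟩
  · intro h; have := congrFun h k; simp at this
  · intro h; have := congrFun h k; simp [hk] at this

lemma gDot_update {s : ℕ} (η : Fin s → Bool) (j : Fin s) (hj : η j = false)
    (h : Fin s → ZMod L) : gDot (Function.update η j true) h = gDot η h + h j := by
  unfold gDot
  rw [← Finset.add_sum_erase _ _ (Finset.mem_univ j),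
    ← Finset.add_sum_erase (a := j) Finset.univ (fun i => if η i then h i else 0)
      (Finset.mem_univ j)]
  have : ∑ x ∈ Finset.univ.erase j, (if Function.update η j true x = true then h x else 0)
      = ∑ x ∈ Finset.univ.erase j, (if η x = true then h x else 0) := by
    refine Finset.sum_congr rfl fun x hx => ?_
    rw [Function.update_of_ne (Finset.ne_of_mem_erase hx)]
  rw [this]
  simp [hj, add_comm]

theorem weighted {s : ℕ} (hs : 2 ≤ s) (f : (Fin s → Bool) → ZMod L → ℂ)
    (hf : ∀ ε x, ‖f ε x‖ ≤ 1) (e : Fin s → Bool) (A B : Finset (ZMod L)) :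
    ‖∑ x, ∑ h : Fin s → ZMod L, (∏ j, ∑ b ∈ B, (if h j - b ∈ A then (1 : ℂ) else 0)) *
        ∏ ε, f ε (x + gDot ε h)‖ ≤ (L : ℝ) ^ s * ((L : ℝ) ^ (s + 1) * nG s (f e)) := by
  choose η h0 h1 h2 using exists_eta hs e
  set u : ZMod L → ZMod L → ℂ := fun y x => if y - x ∈ B then 1 else 0 with hu
  set v : ZMod L → ZMod L → ℂ := fun y x => if x - y ∈ A then 1 else 0 with hv
  have hu1 : ∀ y x, ‖u y x‖ ≤ 1 := by intro y x; simp only [hu]; split_ifs <;> simp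
  have hv1 : ∀ y x, ‖v y x‖ ≤ 1 := by intro y x; simp only [hv]; split_ifs <;> simp
  set F : (Fin s → ZMod L) → (Fin s → Bool) → ZMod L → ℂ := fun y ε x =>
    f ε x * ∏ j, ((if η j = ε then u (y j) x else 1) *
      (if Function.update (η j) j true = ε then v (y j) x else 1)) with hF
  have hF1 : ∀ y ε x, ‖F y ε x‖ ≤ 1 := by
    intro y ε x
    simp only [hF]
    rw [norm_mul]
    refine mul_le_one₀ (hf _ _) (norm_nonneg _) (norm_prod_le_one' _ _ fun j => ?_)
    rw [norm_mul]
    refine mul_le_one₀ ?_ (norm_nonneg _) ?_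
    · split_ifs
      · exact hu1 _ _
      · simp
    · split_ifs
      · exact hv1 _ _
      · simp
  have hFe : ∀ y, F y e = f e := by
    intro y; ext x; simp [hF, h1, h2]
  have key : ∀ (x : ZMod L) (h : Fin s → ZMod L),
      (∏ j, ∑ b ∈ B, (if h j - b ∈ A then (1 : ℂ) else 0)) * ∏ ε, f ε (x + gDot ε h)
      = ∑ y : Fin s → ZMod L, ∏ ε, F y ε (x + gDot ε h) := by
    intro x h
    have e1 : ∀ j, ∑ b ∈ B, (if h j - b ∈ A then (1 : ℂ) else 0) =
        ∑ y : ZMod L, u y (x + gDot (η j) h) *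
          v y (x + gDot (Function.update (η j) j true) h) := by
      intro j
      rw [gDot_update _ _ (h0 j)]
      have e3 : ∑ b ∈ B, (if h j - b ∈ A then (1 : ℂ) else 0)
          = ∑ b, (if b ∈ B then (1 : ℂ) else 0) * (if h j - b ∈ A then (1 : ℂ) else 0) := by
        simp only [ite_mul, one_mul, zero_mul]
        rw [Finset.sum_ite_mem, Finset.univ_inter]
      rw [e3]
      refine Fintype.sum_equiv (Equiv.addLeft (x + gDot (η j) h)) _ _ fun b => ?_
      simp only [hu, hv, Equiv.coe_addLeft, add_sub_cancel_left]
      congr 3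
      have : x + (gDot (η j) h + h j) - (x + gDot (η j) h + b) = h j - b := by ring
      rw [this]
    have e2 : ∀ y : Fin s → ZMod L, ∏ ε, F y ε (x + gDot ε h) =
        (∏ ε, f ε (x + gDot ε h)) * ∏ j, u (y j) (x + gDot (η j) h) *
          v (y j) (x + gDot (Function.update (η j) j true) h) := by
      intro y
      simp only [hF]
      rw [Finset.prod_mul_distrib, Finset.prod_comm]
      congr 1
      refine Finset.prod_congr rfl fun j _ => ?_
      rw [Finset.prod_mul_distrib, Finset.prod_ite_eq, Finset.prod_ite_eq]
      simp
    simp_rw [e1, e2]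
    rw [Finset.prod_univ_sum, ← Finset.mul_sum, Fintype.piFinset_univ, mul_comm]
  simp_rw [key]
  have : ∑ x, ∑ h : Fin s → ZMod L, ∑ y : Fin s → ZMod L, ∏ ε, F y ε (x + gDot ε h)
      = ∑ y : Fin s → ZMod L, ∑ x, ∑ h : Fin s → ZMod L, ∏ ε, F y ε (x + gDot ε h) := by
    rw [Finset.sum_comm (s := (Finset.univ : Finset (Fin s → ZMod L)))
      (t := (Finset.univ : Finset (ZMod L)))]
    exact Finset.sum_congr rfl fun x _ => Finset.sum_comm
  rw [this]
  obtain ⟨t, rfl⟩ : ∃ t, s = t + 1 := ⟨s - 1, by omega⟩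
  calc _ ≤ ∑ y : Fin (t + 1) → ZMod L, (L : ℝ) ^ (t + 1 + 1) * nG (t + 1) (f e) := by
        refine (norm_sum_le _ _).trans (Finset.sum_le_sum fun y _ => ?_)
        rw [← hFe y]
        exact gcs t (F y) (hF1 y) e
    _ = _ := by simp [ZMod.card]

lemma prod_diff {X : Type*} [Fintype X] (p q : X → ℝ) (hp : ∀ x, 0 ≤ p x) (hq : ∀ x, 0 ≤ q x)
    (m D : ℝ) (hm : 0 ≤ m) (hpm : ∑ x, p x = m) (hqm : ∑ x, q x = m) (hD : ∑ x, |p x - q x| ≤ D)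
    (s : ℕ) : m * ∑ h : Fin s → X, |∏ j, p (h j) - ∏ j, q (h j)| ≤ s * D * m ^ s := by
  induction s with
  | zero => simp
  | succ s ih =>
    rw [fsum_cons]
    have hP : ∑ h : Fin s → X, ∏ j, p (h j) = m ^ s := by
      rw [← hpm, Fintype.sum_pow]
    have h1 : ∑ k : X, ∑ h : Fin s → X, |∏ j, p ((Fin.cons k h : Fin (s + 1) → X) j)
          - ∏ j, q ((Fin.cons k h : Fin (s + 1) → X) j)|
        ≤ ∑ k : X, (|p k - q k| * m ^ s +
          q k * ∑ h : Fin s → X, |∏ j, p (h j) - ∏ j, q (h j)|) := by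
      refine Finset.sum_le_sum fun k _ => ?_
      rw [← hP, Finset.mul_sum, Finset.mul_sum, ← Finset.sum_add_distrib]
      refine Finset.sum_le_sum fun h _ => ?_
      simp only [Fin.prod_univ_succ, Fin.cons_zero, Fin.cons_succ]
      have : p k * ∏ j, p (h j) - q k * ∏ j, q (h j) =
        (p k - q k) * ∏ j, p (h j) + q k * (∏ j, p (h j) - ∏ j, q (h j)) := by ring
      rw [this]
      refine (abs_add_le _ _).trans ?_
      rw [abs_mul, abs_mul, abs_of_nonneg (hq k),
        abs_of_nonneg (Finset.prod_nonneg fun j _ => hp (h j))]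
    rw [Finset.sum_add_distrib, ← Finset.sum_mul, ← Finset.sum_mul, hqm] at h1
    calc _ ≤ m * (D * m ^ s + s * D * m ^ s) := by
          apply mul_le_mul_of_nonneg_left _ hm
          refine h1.trans (add_le_add ?_ ih)
          gcongr
      _ = _ := by push_cast; ring

theorem abstract_bound {s : ℕ} (hs : 2 ≤ s) (f : (Fin s → Bool) → ZMod L → ℂ)
    (hf : ∀ ε x, ‖f ε x‖ ≤ 1) (e : Fin s → Bool) (A B : Finset (ZMod L)) (m K : ℕ)
    (hA : A.card = m) (hB : B.card = K) (hK : 0 < K) (D : ℝ) (hD0 : 0 ≤ D)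
    (hD : ∀ b ∈ B, ∑ x, |(if x ∈ A then (1 : ℝ) else 0) - (if x - b ∈ A then 1 else 0)| ≤ D)
    (hf0 : ∑ x, ‖f (fun _ => false) x‖ ≤ m) :
    ‖∑ x, ∑ h : Fin s → ZMod L, (∏ j, (if h j ∈ A then (1 : ℂ) else 0)) *
        ∏ ε, f ε (x + gDot ε h)‖
      ≤ ((L : ℝ) / K) ^ s * ((L : ℝ) ^ (s + 1) * nG s (f e)) + s * D * (m : ℝ) ^ s := by
  have hK' : (0 : ℝ) < K := by exact_mod_cast hK
  have hKc : (K : ℂ) ≠ 0 := by exact_mod_cast hK.ne'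
  set p : ZMod L → ℝ := fun x => if x ∈ A then 1 else 0 with hp
  set q : ZMod L → ℝ := fun x => (K : ℝ)⁻¹ * ∑ b ∈ B, p (x - b) with hq
  have hp0 : ∀ x, 0 ≤ p x := by intro x; simp only [hp]; split_ifs <;> norm_num
  have hq0 : ∀ x, 0 ≤ q x := fun x =>
    mul_nonneg (by positivity) (Finset.sum_nonneg fun b _ => hp0 _)
  have hpm : ∑ x, p x = m := by simp [hp, hA]
  have hqm : ∑ x, q x = m := by
    simp only [hq]
    rw [← Finset.mul_sum, Finset.sum_comm]
    have : ∀ b ∈ B, ∑ x, p (x - b) = m := by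
      intro b _
      rw [← hpm]
      exact Fintype.sum_equiv (Equiv.subRight b) _ _ fun _ => rfl
    rw [Finset.sum_congr rfl this]
    simp [hB]
    field_simp
  have hpq : ∑ x, |p x - q x| ≤ D := by
    have h1 : ∀ x, |p x - q x| ≤ (K : ℝ)⁻¹ * ∑ b ∈ B, |p x - p (x - b)| := by
      intro x
      have : p x - q x = (K : ℝ)⁻¹ * ∑ b ∈ B, (p x - p (x - b)) := by
        rw [Finset.sum_sub_distrib]
        simp [hB, hq]
        field_simp
      rw [this, abs_mul, abs_of_pos (by positivity)]
      gcongr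
      exact Finset.abs_sum_le_sum_abs _ _
    calc ∑ x, |p x - q x| ≤ ∑ x, (K : ℝ)⁻¹ * ∑ b ∈ B, |p x - p (x - b)| :=
          Finset.sum_le_sum fun x _ => h1 x
      _ = (K : ℝ)⁻¹ * ∑ b ∈ B, ∑ x, |p x - p (x - b)| := by
          rw [← Finset.mul_sum, Finset.sum_comm]
      _ ≤ (K : ℝ)⁻¹ * ∑ b ∈ B, D := by
          gcongr with b hb
          exact hD b hb
      _ = D := by simp [hB]; field_simp
  have hw := weighted hs f hf e A B
  have hpd := prod_diff p q hp0 hq0 m D (by positivity) hpm hqm hpq s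
  set P : ZMod L → (Fin s → ZMod L) → ℂ := fun x h => ∏ ε, f ε (x + gDot ε h) with hP
  have hP1 : ∀ x h, ‖P x h‖ ≤ ‖f (fun _ => false) x‖ := by
    intro x h
    simp only [hP]
    rw [← Finset.mul_prod_erase _ _ (Finset.mem_univ (fun _ : Fin s => false)), norm_mul]
    have hg : gDot (fun _ : Fin s => false) h = 0 := by simp [gDot]
    rw [hg, add_zero]
    exact mul_le_of_le_one_right (norm_nonneg _) (norm_prod_le_one' _ _ fun ε => hf _ _)
  have hsplit : ∑ x, ∑ h : Fin s → ZMod L, (∏ j, (if h j ∈ A then (1 : ℂ) else 0)) * P x h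
      = ((K : ℂ)⁻¹) ^ s * (∑ x, ∑ h : Fin s → ZMod L,
          (∏ j, ∑ b ∈ B, (if h j - b ∈ A then (1 : ℂ) else 0)) * P x h)
        + ∑ x, ∑ h : Fin s → ZMod L, ((∏ j, p (h j) - ∏ j, q (h j) : ℝ) : ℂ) * P x h := by
    rw [Finset.mul_sum, ← Finset.sum_add_distrib]
    refine Finset.sum_congr rfl fun x _ => ?_
    rw [Finset.mul_sum, ← Finset.sum_add_distrib]
    refine Finset.sum_congr rfl fun h _ => ?_
    simp only [hp, hq]
    push_cast
    rw [Finset.prod_mul_distrib, Finset.prod_const, Finset.card_univ, Fintype.card_fin]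
    simp only [apply_ite Complex.ofReal, Complex.ofReal_one, Complex.ofReal_zero]
    ring
  rw [hsplit]
  refine (norm_add_le _ _).trans (add_le_add ?_ ?_)
  · rw [norm_mul, norm_pow, norm_inv, Complex.norm_natCast]
    calc _ ≤ ((K : ℝ)⁻¹) ^ s * ((L : ℝ) ^ s * ((L : ℝ) ^ (s + 1) * nG s (f e))) := by
          gcongr
      _ = _ := by rw [div_pow, inv_pow]; field_simp
  · calc _ ≤ ∑ x, ∑ h : Fin s → ZMod L,
            |∏ j, p (h j) - ∏ j, q (h j)| * ‖f (fun _ => false) x‖ := by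
          refine (norm_sum_le _ _).trans (Finset.sum_le_sum fun x _ => ?_)
          refine (norm_sum_le _ _).trans (Finset.sum_le_sum fun h _ => ?_)
          rw [norm_mul, Complex.norm_real, Real.norm_eq_abs]
          exact mul_le_mul_of_nonneg_left (hP1 x h) (abs_nonneg _)
      _ = (∑ x, ‖f (fun _ => false) x‖) *
            ∑ h : Fin s → ZMod L, |∏ j, p (h j) - ∏ j, q (h j)| := by
          rw [Finset.sum_mul]
          refine Finset.sum_congr rfl fun x _ => ?_
          rw [← Finset.sum_mul, mul_comm]
      _ ≤ m * ∑ h : Fin s → ZMod L, |∏ j, p (h j) - ∏ j, q (h j)| := by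
          apply mul_le_mul_of_nonneg_right hf0
          exact Finset.sum_nonneg fun _ _ => abs_nonneg _
      _ ≤ _ := hpd

noncomputable def intA (L M : ℕ) : Finset (ZMod L) := (Finset.Icc 1 M).image (fun n : ℕ => (n : ZMod L))

lemma shift_one (M : ℕ) : ∑ x : ZMod L, |(if x ∈ intA L M then (1 : ℝ) else 0) -
      (if x - 1 ∈ intA L M then 1 else 0)| ≤ 2 := by
  have h1 : ∀ x : ZMod L, |(if x ∈ intA L M then (1 : ℝ) else 0) -
      (if x - 1 ∈ intA L M then 1 else 0)| ≤ (if x = 1 then (1 : ℝ) else 0)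
        + (if x = ((M + 1 : ℕ) : ZMod L) then (1 : ℝ) else 0) := by
    intro x
    have hpos : (0 : ℝ) ≤ (if x = 1 then (1 : ℝ) else 0)
        + (if x = ((M + 1 : ℕ) : ZMod L) then (1 : ℝ) else 0) := by positivity
    by_cases hx : x ∈ intA L M <;> by_cases hx1 : x - 1 ∈ intA L M
    · simpa [hx, hx1] using hpos
    · have : x = 1 := by
        by_contra hne
        apply hx1
        simp only [intA, Finset.mem_image, Finset.mem_Icc] at hx ⊢
        obtain ⟨k, ⟨hk1, hk2⟩, rfl⟩ := hx
        have hk : k ≠ 1 := by rintro rfl; simp at hne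
        refine ⟨k - 1, ⟨by omega, by omega⟩, ?_⟩
        rw [Nat.cast_sub hk1]; simp
      simp only [hx, hx1, if_pos this, if_true, if_false]
      split_ifs <;> norm_num
    · have : x = ((M + 1 : ℕ) : ZMod L) := by
        by_contra hne
        apply hx
        simp only [intA, Finset.mem_image, Finset.mem_Icc] at hx1 ⊢
        obtain ⟨k, ⟨hk1, hk2⟩, hk3⟩ := hx1
        have hxk : x = ((k + 1 : ℕ) : ZMod L) := by push_cast; rw [hk3]; ring
        have hk : k ≠ M := by rintro rfl; exact hne hxk
        exact ⟨k + 1, ⟨by omega, by omega⟩, hxk.symm⟩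
      simp only [hx, hx1, if_pos this, if_true, if_false]
      split_ifs <;> norm_num
    · simpa [hx, hx1] using hpos
  refine (Finset.sum_le_sum fun x _ => h1 x).trans ?_
  rw [Finset.sum_add_distrib]
  simp
  norm_num

lemma shift_le (M t : ℕ) : ∑ x : ZMod L, |(if x ∈ intA L M then (1 : ℝ) else 0) -
      (if x - (t : ZMod L) ∈ intA L M then 1 else 0)| ≤ 2 * t := by
  induction t with
  | zero => simp
  | succ t ih =>
    have h1 : ∑ x : ZMod L, |(if x - (t : ZMod L) ∈ intA L M then (1 : ℝ) else 0) -
      (if x - ((t + 1 : ℕ) : ZMod L) ∈ intA L M then 1 else 0)| ≤ 2 := by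
      refine le_trans (le_of_eq ?_) (shift_one (L := L) M)
      refine Fintype.sum_equiv (Equiv.subRight (t : ZMod L)) _ _ fun x => ?_
      simp [sub_sub]
    calc _ ≤ ∑ x : ZMod L, (|(if x ∈ intA L M then (1 : ℝ) else 0) -
          (if x - (t : ZMod L) ∈ intA L M then 1 else 0)| +
          |(if x - (t : ZMod L) ∈ intA L M then (1 : ℝ) else 0) -
          (if x - ((t + 1 : ℕ) : ZMod L) ∈ intA L M then 1 else 0)|) :=
          Finset.sum_le_sum fun x _ => abs_sub_le _ _ _
      _ ≤ 2 * t + 2 := by rw [Finset.sum_add_distrib]; exact add_le_add ih h1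
      _ = _ := by push_cast; ring

lemma cast_inj_lt {m n : ℕ} (hm : m < L) (hn : n < L) (h : (m : ZMod L) = n) : m = n := by
  have := congrArg ZMod.val h
  rwa [ZMod.val_cast_of_lt hm, ZMod.val_cast_of_lt hn] at this

lemma card_intA (M : ℕ) (hM : M < L) : (intA L M).card = M := by
  rw [intA, Finset.card_image_of_injOn]
  · simp
  · intro m hm n hn h
    simp at hm hn
    exact cast_inj_lt (by omega) (by omega) h

lemma sum_box {s : ℕ} (M : ℕ) (hM : M < L) (Φ : (Fin s → ZMod L) → ℂ) :
    ∑ h : Fin s → ZMod L, (∏ j, (if h j ∈ intA L M then (1 : ℂ) else 0)) * Φ h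
    = ∑ h ∈ Fintype.piFinset (fun _ : Fin s => Finset.Icc 1 M), Φ (fun j => (h j : ZMod L)) := by
  have h1 : ∑ h : Fin s → ZMod L, (∏ j, (if h j ∈ intA L M then (1 : ℂ) else 0)) * Φ h
      = ∑ h ∈ Fintype.piFinset (fun _ : Fin s => intA L M), Φ h := by
    rw [← Finset.sum_filter_add_sum_filter_not Finset.univ
      (fun h : Fin s → ZMod L => ∀ j, h j ∈ intA L M)]
    have hz : ∑ h ∈ Finset.univ.filter (fun h : Fin s → ZMod L => ¬ ∀ j, h j ∈ intA L M),
        (∏ j, (if h j ∈ intA L M then (1 : ℂ) else 0)) * Φ h = 0 := by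
      refine Finset.sum_eq_zero fun h hh => ?_
      simp only [Finset.mem_filter, Finset.mem_univ, true_and, not_forall] at hh
      obtain ⟨j, hj⟩ := hh
      rw [Finset.prod_eq_zero (Finset.mem_univ j) (by simp [hj]), zero_mul]
    rw [hz, add_zero]
    refine Finset.sum_congr (by ext h; simp [Fintype.mem_piFinset]) fun h hh => ?_
    rw [Fintype.mem_piFinset] at hh
    simp [hh]
  rw [h1]
  symm
  refine Finset.sum_nbij' (fun h j => (h j : ZMod L)) (fun h j => (h j).val) ?_ ?_ ?_ ?_ ?_
  · intro h hh
    rw [Fintype.mem_piFinset] at hh ⊢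
    intro j
    exact Finset.mem_image_of_mem _ (hh j)
  · intro h hh
    rw [Fintype.mem_piFinset] at hh ⊢
    intro j
    have := hh j
    simp only [intA, Finset.mem_image] at this
    obtain ⟨k, hk, hk2⟩ := this
    rw [← hk2, ZMod.val_cast_of_lt]
    · exact hk
    · simp at hk; omega
  · intro h hh
    rw [Fintype.mem_piFinset] at hh
    ext j
    have := hh j
    simp at this
    exact ZMod.val_cast_of_lt (by omega)
  · intro h _; simp
  · intro h _; rfl

lemma sum_trunc (M : ℕ) (hM : M ≤ L) {α : Type*} [AddCommMonoid α] (G : ZMod L → α)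
    (hG : ∀ x, M ≤ x.val → G x = 0) :
    ∑ x, G x = ∑ m ∈ Finset.Icc 1 M, G ((m - 1 : ℕ) : ZMod L) := by
  rw [← sum_range_zmod]
  have h1 : ∑ n ∈ Finset.range L, G (n : ZMod L) = ∑ n ∈ Finset.range M, G (n : ZMod L) := by
    symm
    refine Finset.sum_subset (Finset.range_mono hM) fun n hn hn' => hG _ ?_
    rw [Finset.mem_range] at hn hn'
    rw [ZMod.val_cast_of_lt hn]; omega
  rw [h1]
  refine Finset.sum_nbij' (fun n => n + 1) (fun n => n - 1) ?_ ?_ ?_ ?_ ?_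
  · intro n hn; simp at hn ⊢; omega
  · intro n hn; simp at hn ⊢; omega
  · intro n hn; simp
  · intro n hn; simp at hn ⊢; omega
  · intro n hn; simp

lemma gDot_cast {s : ℕ} (ε : Fin s → Bool) (h : Fin s → ℕ) :
    gDot ε (fun j => (h j : ZMod L)) = ((epsDot ε h : ℕ) : ZMod L) := by
  simp only [gDot, epsDot]
  push_cast
  rfl

lemma epsDot_le {s : ℕ} (ε : Fin s → Bool) (h : Fin s → ℕ) (M : ℕ) (hh : ∀ j, h j ≤ M) :
    epsDot ε h ≤ s * M := by
  calc epsDot ε h ≤ ∑ j : Fin s, M := by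
        refine Finset.sum_le_sum fun j _ => ?_
        have := hh j
        split_ifs <;> omega
    _ = s * M := by simp

lemma gowersNorm_mod (s : ℕ) (a : ℕ → ℂ) :
    gowersNorm L (s + 1) a = gowersNorm L (s + 1) (fun n => a (n % L)) := by
  cases s <;> simp [gowersNorm]

end SIG

theorem unnorm_bound (s M : ℕ) (hs : 2 ≤ s) (hM : 0 < M)
    (a : (Fin s → Bool) → ℕ → ℂ)
    (ha : ∀ ε : Fin s → Bool, ε ≠ (fun _ => false) →
      ∀ n ∈ Finset.Icc 1 ((s + 1) * M), ‖a ε n‖ ≤ 1)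
    (e : Fin s → Bool) (he : e ≠ fun _ => false) (K : ℕ) (hK : 0 < K) (hKM : K ≤ M + 1) :
    ∑ m ∈ Finset.Icc 1 M,
      ‖∑ h ∈ Fintype.piFinset (fun _ : Fin s => Finset.Icc 1 M),
          ∏ ε ∈ Finset.univ.filter (fun ε : Fin s → Bool => ε ≠ fun _ => false),
            a ε (m + epsDot ε h)‖
    ≤ (((s + 1) * M : ℝ) / K) ^ s * (((s + 1) * M : ℝ) ^ (s + 1) *
        gowersNorm ((s + 1) * M) s (fun n => a e (n + 1)))
      + s * (2 * (K - 1 : ℝ)) * (M : ℝ) ^ s := by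
  obtain ⟨L, hL⟩ : ∃ L, L = (s + 1) * M := ⟨_, rfl⟩
  have hL1 : (L : ℝ) = (s + 1) * M := by rw [hL]; push_cast; ring
  have hML : M + 1 < L := by rw [hL]; nlinarith
  rw [← hL1, ← hL]
  rw [← hL] at ha
  have : NeZero L := ⟨by omega⟩
  set S : ℕ → ℂ := fun m => ∑ h ∈ Fintype.piFinset (fun _ : Fin s => Finset.Icc 1 M),
          ∏ ε ∈ Finset.univ.filter (fun ε : Fin s → Bool => ε ≠ fun _ => false),
            a ε (m + epsDot ε h) with hS
  choose c hc1 hc2 using fun m => RCLike.exists_norm_eq_mul_self (S m)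
  set F : (Fin s → Bool) → ZMod L → ℂ := fun ε x =>
    if ε = (fun _ => false) then (if x.val < M then c (x.val + 1) else 0)
      else a ε (x.val + 1) with hF
  have hF1 : ∀ ε x, ‖F ε x‖ ≤ 1 := by
    intro ε x
    simp only [hF]
    split_ifs with h1 h2
    · exact (hc1 _).le
    · simp
    · refine ha ε h1 _ ?_
      have := ZMod.val_lt x
      simp; omega
  have hF0 : ∑ x, ‖F (fun _ => false) x‖ ≤ M := by
    rw [sum_trunc M (by omega)]
    · calc _ ≤ ∑ m ∈ Finset.Icc 1 M, (1 : ℝ) := Finset.sum_le_sum fun m _ => hF1 _ _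
        _ = M := by simp
    · intro x hx
      simp [hF, not_lt.2 hx]
  have hnorm : nG s (F e) = gowersNorm L s (fun n => a e (n + 1)) := by
    obtain ⟨t, rfl⟩ : ∃ t, s = t + 1 := ⟨s - 1, by omega⟩
    rw [nG, gowersNorm_mod t (fun n => a e (n + 1))]
    congr 1
    ext n
    simp [hF, he, ZMod.val_natCast]
  have hBcard : ((Finset.range K).image (fun n : ℕ => (n : ZMod L))).card = K := by
    rw [Finset.card_image_of_injOn]
    · simp
    · intro m hm n hn h
      simp at hm hn
      exact cast_inj_lt (by omega) (by omega) h
  have hK1 : (1 : ℝ) ≤ K := by exact_mod_cast hK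
  have hmain := abstract_bound hs F hF1 e (intA L M)
    ((Finset.range K).image (fun n : ℕ => (n : ZMod L))) M K (card_intA M (by omega)) hBcard hK
    (2 * (K - 1 : ℝ)) (by linarith) (by
      intro b hb
      rw [Finset.mem_image] at hb
      obtain ⟨t, ht, rfl⟩ := hb
      refine (shift_le M t).trans ?_
      have : (t : ℝ) + 1 ≤ K := by exact_mod_cast Finset.mem_range.1 ht
      linarith) hF0
  rw [hnorm] at hmain
  refine le_trans (le_of_eq ?_) hmain
  have hprod : ∀ x (h : Fin s → ZMod L), ∏ ε, F ε (x + gDot ε h) = F (fun _ => false) x *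
      ∏ ε ∈ Finset.univ.filter (fun ε : Fin s → Bool => ε ≠ fun _ => false),
        F ε (x + gDot ε h) := by
    intro x h
    rw [← Finset.mul_prod_erase _ _ (Finset.mem_univ (fun _ : Fin s => false))]
    have hg : gDot (fun _ : Fin s => false) h = 0 := by simp [gDot]
    rw [hg, add_zero]
    congr 2
    ext ε; simp
  have hT : ∑ x, ∑ h : Fin s → ZMod L, (∏ j, (if h j ∈ intA L M then (1 : ℂ) else 0)) *
        ∏ ε, F ε (x + gDot ε h) = ((∑ m ∈ Finset.Icc 1 M, ‖S m‖ : ℝ) : ℂ) := by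
    rw [sum_trunc M (by omega), Complex.ofReal_sum]
    · refine Finset.sum_congr rfl fun m hm => ?_
      rw [Finset.mem_Icc] at hm
      have hv : (((m - 1 : ℕ) : ZMod L)).val = m - 1 := ZMod.val_cast_of_lt (by omega)
      rw [sum_box M (by omega)]
      have h3 := hc2 m
      refine Eq.trans ?_ h3.symm
      rw [hS, Finset.mul_sum]
      refine Finset.sum_congr rfl fun h hh => ?_
      rw [hprod]
      congr 1
      · simp only [hF, if_true, hv]
        rw [if_pos (by omega)]
        congr 1; omega
      · refine Finset.prod_congr rfl fun ε hε => ?_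
        rw [Finset.mem_filter] at hε
        simp only [hF, if_neg hε.2, gDot_cast]
        rw [← Nat.cast_add, ZMod.val_cast_of_lt]
        · congr 1; omega
        · have := epsDot_le ε h M (fun j => by
            rw [Fintype.mem_piFinset] at hh
            exact (Finset.mem_Icc.1 (hh j)).2)
          have h5 : L = s * M + M := by rw [hL]; ring
          omega
    · intro x hx
      refine Finset.sum_eq_zero fun h _ => ?_
      rw [hprod]
      simp [hF, not_lt.2 hx]
  rw [hT, Complex.norm_real, Real.norm_of_nonneg]
  exact Finset.sum_nonneg fun _ _ => norm_nonneg _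

/-- Lemma 4.2 of the paper: for `s ≥ 2` and `a_ε : [(s+1)M] → ℂ` bounded by `1`,
`𝔼_{m∈[M]} |𝔼_{h∈[M]^s} ∏_{ε≠0} a_ε(m+ε·h)|
  ≤ C_s (min_{ε≠0} ‖a_ε‖_{U^s(ℤ_{(s+1)M})}^{1/(s+1)} + 1/M)` with
`C_s = (s+1)^{s+1}((2s)^s+1)`.  Here the Gowers norm is taken of the periodic extension
of `a_ε · 1_{[(s+1)M]}` (the sequence `n ↦ a_ε (n+1)` on residues `0,…,(s+1)M-1`). -/
theorem short_interval_gowers_estimate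
    (s M : ℕ) (hs : 2 ≤ s) (hM : 0 < M)
    (a : (Fin s → Bool) → ℕ → ℂ)
    (ha : ∀ ε : Fin s → Bool, ε ≠ (fun _ => false) →
      ∀ n ∈ Finset.Icc 1 ((s + 1) * M), ‖a ε n‖ ≤ 1) :
    (M : ℝ)⁻¹ * ∑ m ∈ Finset.Icc 1 M,
      ‖((M : ℂ) ^ s)⁻¹ * ∑ h ∈ Fintype.piFinset (fun _ : Fin s => Finset.Icc 1 M),
          ∏ ε ∈ Finset.univ.filter (fun ε : Fin s → Bool => ε ≠ fun _ => false),
            a ε (m + epsDot ε h)‖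
      ≤ ((s + 1 : ℝ) ^ (s + 1) * ((2 * s : ℝ) ^ s + 1)) *
        ((⨅ ε : {ε : Fin s → Bool // ε ≠ fun _ => false},
            gowersNorm ((s + 1) * M) s (fun n => a ε.1 (n + 1))) ^ (((s : ℝ) + 1)⁻¹)
          + 1 / (M : ℝ)) := by
  have hM' : (0 : ℝ) < M := by exact_mod_cast hM
  have hL0 : 0 < (s + 1) * M := by positivity
  have : NeZero ((s + 1) * M) := ⟨hL0.ne'⟩
  have : Nonempty {ε : Fin s → Bool // ε ≠ fun _ => false} :=
    ⟨⟨fun _ => true, fun h => by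
      have := congrFun h ⟨0, by omega⟩
      simp at this⟩⟩
  obtain ⟨⟨e, he⟩, hinf⟩ := exists_eq_ciInf_of_finite
    (f := fun ε : {ε : Fin s → Bool // ε ≠ fun _ => false} =>
      gowersNorm ((s + 1) * M) s (fun n => a ε.1 (n + 1)))
  rw [← hinf]
  set U : ℝ := gowersNorm ((s + 1) * M) s (fun n => a e (n + 1)) with hU
  have hUn : U = nG (L := (s + 1) * M) s (fun x => a e (x.val + 1)) := by
    obtain ⟨t, rfl⟩ : ∃ t, s = t + 1 := ⟨s - 1, by omega⟩
    rw [hU, nG, gowersNorm_mod t (fun n => a e (n + 1))]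
    congr 1
    ext n
    simp [ZMod.val_natCast]
  have hU01 : 0 ≤ U ∧ U ≤ 1 := by
    rw [hUn]
    clear_value U
    obtain ⟨t, rfl⟩ : ∃ t, s = t + 1 := ⟨s - 1, by omega⟩
    refine ⟨nG_nonneg _ _, nG_le_one _ _ fun x => ha e he _ ?_⟩
    have := ZMod.val_lt x
    simp only [Finset.mem_Icc]; omega
  obtain ⟨hU0, hU1⟩ := hU01
  set r : ℝ := U ^ (((s : ℝ) + 1)⁻¹) with hr
  have hr0 : 0 ≤ r := Real.rpow_nonneg hU0 _
  have hr1 : r ≤ 1 := Real.rpow_le_one hU0 hU1 (by positivity)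
  have hrU : r ^ (s + 1) = U := by
    have := Real.rpow_inv_natCast_pow hU0 (n := s + 1) (by omega)
    push_cast at this
    exact this
  set K : ℕ := ⌊(M : ℝ) * r⌋₊ + 1 with hK
  have hK1 : (K : ℝ) - 1 ≤ M * r := by
    rw [hK]; push_cast
    have := Nat.floor_le (a := (M : ℝ) * r) (by positivity)
    linarith
  have hK2 : (M : ℝ) * r ≤ K := by
    rw [hK]; push_cast
    exact (Nat.lt_floor_add_one _).le
  have hKM : K ≤ M + 1 := by
    have : ⌊(M : ℝ) * r⌋₊ ≤ M := by
      apply Nat.floor_le_of_le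
      nlinarith
    omega
  have hKpos : (0 : ℝ) < K := by rw [hK]; positivity
  have hb := unnorm_bound s M hs hM a ha e he K (by omega) hKM
  rw [← hU] at hb
  simp_rw [norm_mul, norm_inv, norm_pow, Complex.norm_natCast]
  rw [← Finset.mul_sum]
  have hs' : (2 : ℝ) ≤ s := by exact_mod_cast hs
  have hmain : ((M : ℝ) / K) ^ s * U ≤ r := by
    rw [← hrU, pow_succ, ← mul_assoc, ← mul_pow]
    have h1 : (M : ℝ) / K * r ≤ 1 := by
      rw [div_mul_eq_mul_div, div_le_one hKpos]; exact hK2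
    exact mul_le_of_le_one_left hr0 (pow_le_one₀ (by positivity) h1)
  calc _ ≤ (M : ℝ)⁻¹ * (((M : ℝ) ^ s)⁻¹ *
        ((((s + 1) * M : ℝ) / K) ^ s * (((s + 1) * M : ℝ) ^ (s + 1) * U)
          + s * (2 * (K - 1 : ℝ)) * (M : ℝ) ^ s)) := by gcongr
    _ = (s + 1 : ℝ) ^ (s + 1) * (s + 1 : ℝ) ^ s * (((M : ℝ) / K) ^ s * U)
          + 2 * s * ((K - 1 : ℝ) / M) := by
        rw [mul_div_assoc, mul_pow, mul_pow, pow_succ (M : ℝ)]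
        field_simp
    _ ≤ (s + 1 : ℝ) ^ (s + 1) * (2 * s : ℝ) ^ s * r + (s + 1 : ℝ) ^ (s + 1) * r := by
        have h2 : (K - 1 : ℝ) / M ≤ r := by
          rw [div_le_iff₀ hM']; linarith
        have h3 : (2 * s : ℝ) ≤ (s + 1 : ℝ) ^ (s + 1) := by
          calc (2 * s : ℝ) ≤ (s + 1 : ℝ) ^ 2 := by nlinarith
            _ ≤ (s + 1 : ℝ) ^ (s + 1) := pow_le_pow_right₀ (by linarith) (by omega)
        have h4 : (s + 1 : ℝ) ^ s ≤ (2 * s : ℝ) ^ s :=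
          pow_le_pow_left₀ (by positivity) (by linarith) _
        have h5 : 2 * s * ((K - 1 : ℝ) / M) ≤ 2 * s * r :=
          mul_le_mul_of_nonneg_left h2 (by positivity)
        have h6 : (2 * s : ℝ) * r ≤ (s + 1 : ℝ) ^ (s + 1) * r :=
          mul_le_mul_of_nonneg_right h3 hr0
        refine add_le_add ?_ (h5.trans h6)
        refine mul_le_mul ?_ hmain (by positivity) (by positivity)
        exact mul_le_mul_of_nonneg_left h4 (by positivity)
    _ = ((s + 1 : ℝ) ^ (s + 1) * ((2 * s : ℝ) ^ s + 1)) * r := by ring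
    _ ≤ _ := by
        apply mul_le_mul_of_nonneg_left _ (by positivity)
        have : (0 : ℝ) ≤ 1 / M := by positivity
        linarith
end

section
/- Let s ≥ 1, let a : ℕ → ℂ be bounded by 1 and admit correlations for Cesàro averages on a sequence of intervals I = (I_N) with |I_N| → ∞. Then the star-uniformity seminorm satisfies ‖a‖_{U^s_*(I)} ≤ 4·‖a‖_{U^s(I)}. -/
open Filter Finset Topology

/-- The sequence `a · 1_{[H]}` (i.e. `a(1),…,a(H),0,0,…`), placed on residues `0,…,H-1`. -/
noncomputable def truncSeq (a : ℕ → ℂ) (H : ℕ) : ℕ → ℂ := fun n => if n < H then a (n + 1) else 0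

/-- `‖a‖_{U^s[H]} = ‖a·1_{[H]}‖_{U^s(ℤ_{2H})} / ‖1_{[H]}‖_{U^s(ℤ_{2H})}`. -/
noncomputable def UsShort (s H : ℕ) (a : ℕ → ℂ) : ℝ :=
  gowersNorm (2 * H) s (truncSeq a H) / gowersNorm (2 * H) s (truncSeq (fun _ => 1) H)

/-- The Gowers cube product `∏_{ε∈{0,1}^s} C^{|ε|} a(n + ε·h)`. -/
noncomputable def cubeProd (a : ℕ → ℂ) {s : ℕ} (h : Fin s → ℕ) (n : ℕ) : ℂ :=
  ∏ ε : Fin s → Bool,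
    if (Finset.univ.filter fun j => ε j = true).card % 2 = 1 then
      (starRingEnd ℂ) (a (n + epsDot ε h))
    else a (n + epsDot ε h)

/-- Cesàro average of `f` over the interval `I N`. -/
noncomputable def cesaroAvg (I : ℕ → Finset ℕ) (f : ℕ → ℂ) (N : ℕ) : ℂ :=
  ((I N).card : ℂ)⁻¹ * ∑ n ∈ I N, f n


/-- Real even positive-definite functions on the integers, normalised. -/
structure PDR (d : ℤ → ℝ) : Prop where
  even : ∀ t, d (-t) = d t
  le_one : d 0 ≤ 1
  pos : ∀ w : ℤ →₀ ℝ, 0 ≤ w.sum fun i x => w.sum fun k y => x * y * d (k - i)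

/-- Fejer average. -/
noncomputable def Fej (T : ℕ) (d : ℤ → ℝ) : ℝ :=
  ((T : ℝ) ^ 2)⁻¹ * ∑ i ∈ range T, ∑ k ∈ range T, d ((k : ℤ) - i)

/-- One-sided (Dirichlet) average. -/
noncomputable def Dir (T : ℕ) (d : ℤ → ℝ) : ℝ :=
  (T : ℝ)⁻¹ * ∑ i ∈ range T, d ((i : ℤ) + 1)

@[reducible]
noncomputable def pdCore (d : ℤ → ℝ) (hd : PDR d) : PreInnerProductSpace.Core ℝ (ℤ →₀ ℝ) where
  inner w v := w.sum fun i x => v.sum fun k y => x * y * d (k - i)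
  conj_inner_symm w v := by
    simp only [conj_trivial]
    rw [Finsupp.sum_comm]
    refine Finsupp.sum_congr fun i _ => Finsupp.sum_congr fun k _ => ?_
    rw [← hd.even, neg_sub]; ring
  re_inner_nonneg w := by simpa using hd.pos w
  add_left w v z := by
    rw [Finsupp.sum_add_index']
    · simp
    · intro i x y
      rw [← Finsupp.sum_add]
      refine Finsupp.sum_congr fun k _ => ?_
      ring
  smul_left w v r := by
    rw [Finsupp.sum_smul_index' (by simp), Finsupp.mul_sum]
    refine Finsupp.sum_congr fun k _ => ?_
    rw [Finsupp.mul_sum]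
    refine Finsupp.sum_congr fun k _ => ?_
    simp [mul_assoc]

lemma exists_stationary (d : ℤ → ℝ) (hd : PDR d) :
    ∃ (E : Type) (_ : SeminormedAddCommGroup E) (_ : InnerProductSpace ℝ E) (x : ℤ → E),
      ∀ s t, inner ℝ (x s) (x t) = d (t - s) := by
  let := pdCore d hd
  let i1 : SeminormedAddCommGroup (ℤ →₀ ℝ) := InnerProductSpace.Core.toSeminormedAddCommGroup (𝕜 := ℝ)
  let i2 : InnerProductSpace ℝ (ℤ →₀ ℝ) := InnerProductSpace.ofCore (pdCore d hd)
  refine ⟨ℤ →₀ ℝ, i1, i2, fun t => Finsupp.single t 1, fun s t => ?_⟩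
  change ((Finsupp.single s (1:ℝ)).sum fun i x => (Finsupp.single t (1:ℝ)).sum fun k y => x * y * d (k - i)) = _
  simp

section
variable {E : Type} [SeminormedAddCommGroup E] [InnerProductSpace ℝ E]

/-- Window averages. -/
noncomputable def winAv (x : ℤ → E) (R : ℕ) (t : ℤ) : E := (R : ℝ)⁻¹ • ∑ i ∈ range R, x (t + i)

lemma norm_avg_le (x : ℕ → E) (C : ℝ) (R : ℕ) (hR : 1 ≤ R) (h : ∀ i ∈ range R, ‖x i‖ ≤ C) :
    ‖(R : ℝ)⁻¹ • ∑ i ∈ range R, x i‖ ≤ C := by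
  have hR' : (0 : ℝ) < R := by exact_mod_cast hR
  rw [norm_smul, norm_inv, Real.norm_natCast]
  rw [inv_mul_le_iff₀ hR']
  refine (norm_sum_le _ _).trans ?_
  refine (Finset.sum_le_sum h).trans ?_
  simp

lemma avg_sub_const (x : ℕ → E) (y : E) (R : ℕ) (hR : 1 ≤ R) :
    (R : ℝ)⁻¹ • ∑ i ∈ range R, x i - y = (R : ℝ)⁻¹ • ∑ i ∈ range R, (x i - y) := by
  have hR' : (R : ℝ) ≠ 0 := by positivity
  rw [Finset.sum_sub_distrib, smul_sub]
  simp [← Nat.cast_smul_eq_nsmul ℝ, smul_smul, hR']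

lemma winAv_step (x : ℤ → E) (hx : ∀ t, ‖x t‖ ≤ 1) (R : ℕ) (hR : 1 ≤ R) (t : ℤ) :
    ‖winAv x R (t + 1) - winAv x R t‖ ≤ 2 / R := by
  have hR' : (0 : ℝ) < R := by exact_mod_cast hR
  unfold winAv
  rw [← smul_sub, ← Finset.sum_sub_distrib]
  have : ∑ i ∈ range R, (x (t + 1 + i) - x (t + i)) = x (t + R) - x t := by
    have := Finset.sum_range_sub (fun i : ℕ => x (t + i)) R
    simp only [Nat.cast_zero, add_zero] at this
    rw [← this]
    refine Finset.sum_congr rfl fun i _ => ?_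
    push_cast; ring_nf
  rw [this, norm_smul, norm_inv, Real.norm_natCast, div_eq_inv_mul]
  gcongr
  refine (norm_sub_le _ _).trans ?_
  linarith [hx (t + R), hx t]

lemma winAv_shift (x : ℤ → E) (hx : ∀ t, ‖x t‖ ≤ 1) (R : ℕ) (hR : 1 ≤ R) (t : ℤ) (k : ℕ) :
    ‖winAv x R (t + k) - winAv x R t‖ ≤ 2 * k / R := by
  induction k with
  | zero => simp
  | succ k ih =>
    have h1 := winAv_step x hx R hR (t + k)
    have : winAv x R (t + (k + 1 : ℕ)) - winAv x R t =
      (winAv x R (t + k + 1) - winAv x R (t + k)) + (winAv x R (t + k) - winAv x R t) := by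
      push_cast; rw [add_assoc]; abel
    rw [this]
    refine (norm_add_le _ _).trans ?_
    push_cast
    have e : 2 * ((k:ℝ) + 1) / R = 2 / R + 2 * k / R := by ring
    linarith

lemma winAv_norm_sq (d : ℤ → ℝ) (x : ℤ → E) (hx : ∀ s t, inner ℝ (x s) (x t) = d (t - s))
    (R : ℕ) (t : ℤ) : ‖winAv x R t‖ ^ 2 = Fej R d := by
  rw [← real_inner_self_eq_norm_sq]
  unfold winAv Fej
  rw [inner_smul_left, inner_smul_right, sum_inner]
  simp only [inner_sum, hx]
  simp only [conj_trivial]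
  rw [← mul_assoc, ← mul_inv, ← sq]
  congr 1
  refine Finset.sum_congr rfl fun i _ => Finset.sum_congr rfl fun k _ => ?_
  congr 1; ring

end

lemma Fej_nonneg (d : ℤ → ℝ) (hd : PDR d) (T : ℕ) : 0 ≤ Fej T d := by
  obtain ⟨E, _, _, x, hx⟩ := exists_stationary d hd
  rw [← winAv_norm_sq d x hx T 0]; positivity

lemma Fej_le_one (d : ℤ → ℝ) (hd : PDR d) (T : ℕ) : Fej T d ≤ 1 := by
  obtain ⟨E, _, _, x, hx⟩ := exists_stationary d hd
  rcases Nat.eq_zero_or_pos T with rfl | hT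
  · simp [Fej]
  have hx1 : ∀ t, ‖x t‖ ≤ 1 := by
    intro t
    have := hx t t
    rw [real_inner_self_eq_norm_sq, sub_self] at this
    have := hd.le_one
    nlinarith [norm_nonneg (x t)]
  rw [← winAv_norm_sq d x hx T 0]
  have := norm_avg_le (fun i => x (0 + i)) 1 T hT (fun i _ => hx1 _)
  have h2 : ‖winAv x T 0‖ ≤ 1 := this
  nlinarith [norm_nonneg (winAv x T 0)]

lemma Fej_mono (d : ℤ → ℝ) (hd : PDR d) (R K : ℕ) (hR : 1 ≤ R) (hK : 1 ≤ K) :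
    Fej R d ≤ Fej K d + 8 * K / R := by
  have hR' : (0 : ℝ) < R := by exact_mod_cast hR
  rcases le_total R K with h | h
  · have h1 := Fej_le_one d hd R
    have h2 := Fej_nonneg d hd K
    have : (1 : ℝ) ≤ 8 * K / R := by
      rw [le_div_iff₀ hR']
      have : (R : ℝ) ≤ K := by exact_mod_cast h
      linarith
    linarith
  obtain ⟨E, _, _, x, hx⟩ := exists_stationary d hd
  have hx1 : ∀ t, ‖x t‖ ≤ 1 := by
    intro t
    have := hx t t
    rw [real_inner_self_eq_norm_sq, sub_self] at this
    have := hd.le_one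
    nlinarith [norm_nonneg (x t)]
  have hswap : (K : ℝ)⁻¹ • ∑ k ∈ range K, winAv x R k = (R : ℝ)⁻¹ • ∑ i ∈ range R, winAv x K i := by
    unfold winAv
    simp only [← Finset.smul_sum]
    rw [Finset.sum_comm, smul_comm]
    congr 2
    refine Finset.sum_congr rfl fun i _ => Finset.sum_congr rfl fun k _ => ?_
    rw [add_comm]
  have hKn : ∀ t, ‖winAv x K t‖ = √(Fej K d) := by
    intro t; rw [← winAv_norm_sq d x hx K t, Real.sqrt_sq (norm_nonneg _)]
  have h1 : ‖(R : ℝ)⁻¹ • ∑ i ∈ range R, winAv x K i‖ ≤ √(Fej K d) :=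
    norm_avg_le (fun i => winAv x K i) _ R hR (fun i _ => (hKn _).le)
  have h2 : ‖(K : ℝ)⁻¹ • ∑ k ∈ range K, winAv x R k - winAv x R 0‖ ≤ 2 * K / R := by
    rw [avg_sub_const (fun k => winAv x R k) _ K hK]
    refine norm_avg_le _ _ K hK fun i hi => ?_
    have := winAv_shift x hx1 R hR 0 i
    rw [zero_add] at this
    refine this.trans ?_
    have : (i : ℝ) ≤ K := by exact_mod_cast (mem_range.mp hi).le
    gcongr
  have h3 : ‖winAv x R 0‖ ≤ √(Fej K d) + 2 * K / R := by
    have := norm_sub_norm_le (winAv x R 0) ((K : ℝ)⁻¹ • ∑ k ∈ range K, winAv x R k)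
    rw [norm_sub_rev] at this
    rw [hswap] at this h2
    linarith
  rw [← winAv_norm_sq d x hx R 0]
  have h0 := Fej_nonneg d hd K
  have h4 : √(Fej K d) ≤ 1 := by
    exact Real.sqrt_le_iff.mpr ⟨zero_le_one, by simpa using Fej_le_one d hd K⟩
  have h5 := Real.sq_sqrt h0
  have h6 : (K : ℝ) / R ≤ 1 := by
    rw [div_le_one hR']; exact_mod_cast h
  have h7 : (0:ℝ) ≤ K / R := by positivity
  have e1 : 2 * (K:ℝ) / R = 2 * (K / R) := by ring
  have e2 : 8 * (K:ℝ) / R = 8 * (K / R) := by ring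
  rw [e1] at h3
  rw [e2]
  have h8 : ‖winAv x R 0‖ ^ 2 ≤ (√(Fej K d) + 2 * (K / R)) ^ 2 := by
    gcongr
  have h9 := Real.sqrt_nonneg (Fej K d)
  nlinarith [mul_le_mul h4 h6 h7 zero_le_one, mul_le_mul h6 h6 h7 zero_le_one]

lemma Dir_close (d : ℤ → ℝ) (hd : PDR d) (T T' : ℕ) (hT : 1 ≤ T) (hT' : 1 ≤ T') :
    (Dir T d - Fej T' d) ^ 2 ≤ Fej T d - Fej T' d + 4 * T / T' := by
  have hT0 : (0 : ℝ) < T := by exact_mod_cast hT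
  have hT0' : (0 : ℝ) < T' := by exact_mod_cast hT'
  obtain ⟨E, _, _, x, hx⟩ := exists_stationary d hd
  have hx1 : ∀ t, ‖x t‖ ≤ 1 := by
    intro t
    have := hx t t
    rw [real_inner_self_eq_norm_sq, sub_self] at this
    have := hd.le_one
    nlinarith [norm_nonneg (x t)]
  set M : ℤ → E := fun t => (T' : ℝ)⁻¹ • ∑ i ∈ range T', winAv x T' (t - i) with hM
  set F := Fej T' d with hF
  have hF0 : 0 ≤ F := Fej_nonneg d hd T'
  have hinner : ∀ t, inner ℝ (x t) (M t) = F := by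
    intro t
    simp only [hM, hF, Fej, winAv]
    rw [inner_smul_right, inner_sum]
    simp only [inner_smul_right, inner_sum, hx, ← Finset.mul_sum]
    rw [← mul_assoc, ← mul_inv, ← sq]
    congr 1
    refine Finset.sum_congr rfl fun i _ => Finset.sum_congr rfl fun k _ => ?_
    congr 1; ring
  have hMn : ‖M 0‖ ≤ √F := by
    refine norm_avg_le _ _ T' hT' fun i _ => ?_
    rw [hF, ← winAv_norm_sq d x hx T' (0 - i), Real.sqrt_sq (norm_nonneg _)]
  have hMs : ∀ k : ℕ, ‖M k - M 0‖ ≤ 2 * k / T' := by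
    intro k
    simp only [hM]
    rw [← smul_sub, ← Finset.sum_sub_distrib]
    refine norm_avg_le _ _ T' hT' fun i _ => ?_
    have := winAv_shift x hx1 T' hT' (0 - i) k
    have e : (0 - (i:ℤ) + k) = k - i := by ring
    rwa [e] at this
  set A := winAv x T 1 with hA
  have hAM : F - 2 * T / T' ≤ inner ℝ A (M 0) := by
    have h1 : ∀ i ∈ range T, F - 2 * T / T' ≤ inner ℝ (x (1 + i)) (M 0) := by
      intro i hi
      have h2 := hinner (1 + i)
      have h3 := hMs (1 + i)
      push_cast at h3
      have h4 : inner ℝ (x (1 + i)) (M (1 + i)) - inner ℝ (x (1 + i)) (M 0) ≤ 2 * T / T' := by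
        rw [← inner_sub_right]
        refine (real_inner_le_norm _ _).trans ?_
        have h5 : (1 + i : ℝ) ≤ T := by
          have := mem_range.mp hi
          exact_mod_cast (by omega : 1 + i ≤ T)
        have h6 : 2 * (1 + i : ℝ) / T' ≤ 2 * T / T' := by gcongr
        calc ‖x (1 + i)‖ * ‖M (1 + i) - M 0‖ ≤ 1 * ‖M (1 + i) - M 0‖ := by
              gcongr; exact hx1 _
          _ ≤ _ := by linarith
      linarith
    rw [hA, winAv, inner_smul_left, sum_inner, conj_trivial, le_inv_mul_iff₀ hT0]
    have := Finset.sum_le_sum h1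
    rw [sum_const, card_range, nsmul_eq_mul] at this
    exact this
  have hDA : Dir T d = inner ℝ (x 0) A := by
    rw [hA, winAv, inner_smul_right, inner_sum, Dir]
    congr 1
    refine Finset.sum_congr rfl fun i _ => ?_
    rw [hx]; congr 1; ring
  have hdiff : Dir T d - F = inner ℝ (x 0) (A - M 0) := by
    rw [inner_sub_right, hinner, hDA]
  have hb : |Dir T d - F| ≤ ‖A - M 0‖ := by
    rw [hdiff]
    refine (abs_real_inner_le_norm _ _).trans ?_
    calc _ ≤ 1 * ‖A - M 0‖ := by gcongr; exact hx1 _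
      _ = _ := one_mul _
  have hsq : ‖A - M 0‖ ^ 2 = ‖A‖ ^ 2 - 2 * inner ℝ A (M 0) + ‖M 0‖ ^ 2 := norm_sub_sq_real _ _
  have hAn : ‖A‖ ^ 2 = Fej T d := winAv_norm_sq d x hx T 1
  have hMn2 : ‖M 0‖ ^ 2 ≤ F := by
    calc ‖M 0‖ ^ 2 ≤ √F ^ 2 := by gcongr
      _ = F := Real.sq_sqrt hF0
  calc (Dir T d - F) ^ 2 = |Dir T d - F| ^ 2 := (sq_abs _).symm
    _ ≤ ‖A - M 0‖ ^ 2 := by gcongr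
    _ ≤ _ := by
      have e : 4 * (T:ℝ) / T' = 2 * (2 * T / T') := by ring
      rw [e]
      linarith


/-- Integral of `f` against the finitely supported weight `κ`. -/
noncomputable def wav (κ : ℤ →₀ ℝ) (f : ℤ → ℝ) : ℝ := ∑ u ∈ κ.support, κ u * f u

lemma wav_eq (κ : ℤ →₀ ℝ) (f : ℤ → ℝ) : wav κ f = Finsupp.linearCombination ℝ f κ := by
  simp [wav, Finsupp.linearCombination_apply, Finsupp.sum]

lemma wav_single (t : ℤ) (x : ℝ) (f : ℤ → ℝ) : wav (Finsupp.single t x) f = x * f t := by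
  simp [wav_eq]

/-- Probability weights. -/
structure PW (κ : ℤ →₀ ℝ) : Prop where
  nonneg : ∀ t, 0 ≤ κ t
  tot : wav κ (fun _ => 1) = 1

noncomputable def FW (T : ℕ) : ℤ →₀ ℝ :=
  ((T : ℝ) ^ 2)⁻¹ • ∑ i ∈ range T, ∑ k ∈ range T, Finsupp.single ((k : ℤ) - i) (1 : ℝ)

noncomputable def DW (T : ℕ) : ℤ →₀ ℝ :=
  (T : ℝ)⁻¹ • ∑ i ∈ range T, Finsupp.single ((i : ℤ) + 1) (1 : ℝ)

lemma wav_FW (T : ℕ) (f : ℤ → ℝ) : wav (FW T) f = Fej T f := by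
  simp [wav_eq, FW, Fej]

lemma wav_DW (T : ℕ) (f : ℤ → ℝ) : wav (DW T) f = Dir T f := by
  simp [wav_eq, DW, Dir]

lemma PW_FW (T : ℕ) (hT : 1 ≤ T) : PW (FW T) where
  nonneg t := by
    have : (0 : ℤ →₀ ℝ) ≤ FW T := by
      unfold FW
      refine smul_nonneg (by positivity) (Finset.sum_nonneg fun i _ => Finset.sum_nonneg fun k _ => ?_)
      simp
    exact this t
  tot := by
    rw [wav_FW]; simp [Fej]; field_simp

lemma PW_DW (T : ℕ) (hT : 1 ≤ T) : PW (DW T) where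
  nonneg t := by
    have : (0 : ℤ →₀ ℝ) ≤ DW T := by
      unfold DW
      refine smul_nonneg (by positivity) (Finset.sum_nonneg fun i _ => ?_)
      simp
    exact this t
  tot := by
    rw [wav_DW]; simp [Dir]; field_simp

lemma PDR_wav (κ : ℤ →₀ ℝ) (hκ : PW κ) (R : ℤ → ℤ → ℝ) (hR : ∀ u, PDR (R u)) :
    PDR (fun t => wav κ (fun u => R u t)) where
  even t := by simp [wav, (hR _).even]
  le_one := by
    rw [← hκ.tot]
    refine Finset.sum_le_sum fun u _ => ?_
    exact mul_le_mul_of_nonneg_left (hR u).le_one (hκ.nonneg u)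
  pos w := by
    have : (w.sum fun i x => w.sum fun k y => x * y * wav κ (fun u => R u (k - i)))
      = ∑ u ∈ κ.support, κ u * (w.sum fun i x => w.sum fun k y => x * y * R u (k - i)) := by
      simp only [Finsupp.sum, wav, Finset.mul_sum]
      rw [Finset.sum_congr rfl fun i _ => Finset.sum_comm, Finset.sum_comm]
      refine Finset.sum_congr rfl fun u _ => Finset.sum_congr rfl fun i _ =>
        Finset.sum_congr rfl fun k _ => ?_
      ring
    rw [this]
    exact Finset.sum_nonneg fun u _ => mul_nonneg (hκ.nonneg u) ((hR u).pos w)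

/-- Iterated weighted averages. -/
noncomputable def SS : (s : ℕ) → (Fin s → ℤ →₀ ℝ) → ((Fin s → ℤ) → ℝ) → ℝ
  | 0, _, r => r Fin.elim0
  | (s + 1), κ, r => wav (κ 0) fun t => SS s (Fin.tail κ) fun h => r (Fin.cons t h)

lemma SS_pdr (s : ℕ) (κ : Fin s → ℤ →₀ ℝ) (hκ : ∀ j, PW (κ j)) (R : ℤ → (Fin s → ℤ) → ℝ)
    (hR : ∀ h, PDR (fun t => R t h)) : PDR (fun t => SS s κ (R t)) := by
  induction s with
  | zero => exact hR _
  | succ s ih =>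
    simp only [SS]
    exact PDR_wav _ (hκ 0) (fun u t => SS s (Fin.tail κ) fun h => R t (Fin.cons u h))
      fun u => ih (Fin.tail κ) (fun j => hκ j.succ) _ fun h => hR _

lemma wav_comm (κ μ : ℤ →₀ ℝ) (f : ℤ → ℤ → ℝ) :
    wav κ (fun t => wav μ (fun u => f t u)) = wav μ (fun u => wav κ (fun t => f t u)) := by
  simp only [wav, Finset.mul_sum]
  rw [Finset.sum_comm]
  refine Finset.sum_congr rfl fun u _ => Finset.sum_congr rfl fun t _ => ?_
  ring

lemma SS_iso (s : ℕ) (κ : Fin s → ℤ →₀ ℝ) (r : (Fin s → ℤ) → ℝ) (j : Fin s) :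
    SS s κ r = wav (κ j) fun t => SS s (Function.update κ j (Finsupp.single t 1)) r := by
  induction s with
  | zero => exact j.elim0
  | succ s ih =>
    refine Fin.cases ?_ (fun j => ?_) j
    · simp [SS, wav_single, Fin.tail_update_zero]
    · simp only [SS, Fin.tail_update_succ]
      simp only [Function.update_of_ne (Fin.succ_ne_zero j).symm]
      have := fun t => ih (Fin.tail κ) (fun h => r (Fin.cons t h)) j
      simp only [this]
      rw [wav_comm]
      rfl

/-- Functions positive definite in each coordinate. -/
def Good (s : ℕ) (r : (Fin s → ℤ) → ℝ) : Prop :=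
  ∀ (j : Fin s) (h : Fin s → ℤ), PDR (fun t => r (Function.update h j t))

lemma Good.zero {s : ℕ} {r : (Fin (s + 1) → ℤ) → ℝ} (hr : Good (s + 1) r) (h : Fin s → ℤ) :
    PDR (fun t => r (Fin.cons t h)) := by
  have := hr 0 (Fin.cons 0 h)
  simpa using this

lemma Good.tail {s : ℕ} {r : (Fin (s + 1) → ℤ) → ℝ} (hr : Good (s + 1) r) (t : ℤ) :
    Good s (fun h => r (Fin.cons t h)) := by
  intro j h
  have := hr j.succ (Fin.cons t h)
  simpa [Fin.cons_update] using this

lemma iso_pdr (s : ℕ) (κ : Fin s → ℤ →₀ ℝ) (j : Fin s) (hκ : ∀ i, i ≠ j → PW (κ i))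
    (r : (Fin s → ℤ) → ℝ) (hr : Good s r) :
    PDR (fun t => SS s (Function.update κ j (Finsupp.single t 1)) r) := by
  induction s with
  | zero => exact j.elim0
  | succ s ih =>
    revert hκ
    refine Fin.cases ?_ (fun j => ?_) j
    · intro hκ
      simp only [SS, wav_single, Fin.tail_update_zero, Function.update_self, one_mul]
      exact SS_pdr s _ (fun i => hκ i.succ (Fin.succ_ne_zero i)) (fun t h => r (Fin.cons t h)) hr.zero
    · intro hκ
      simp only [SS, Fin.tail_update_succ]
      simp only [Function.update_of_ne (Fin.succ_ne_zero j).symm]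
      refine PDR_wav _ (hκ 0 (Fin.succ_ne_zero j).symm)
        (fun u t => SS s (Function.update (Fin.tail κ) j (Finsupp.single t 1)) fun h => r (Fin.cons u h)) ?_
      intro u
      exact ih (Fin.tail κ) j (fun i hi => hκ i.succ (by simpa using hi)) _ (hr.tail u)

lemma SS_update (s : ℕ) (κ : Fin s → ℤ →₀ ℝ) (r : (Fin s → ℤ) → ℝ) (j : Fin s) (μ : ℤ →₀ ℝ) :
    SS s (Function.update κ j μ) r =
      wav μ fun t => SS s (Function.update κ j (Finsupp.single t 1)) r := by
  rw [SS_iso s (Function.update κ j μ) r j]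
  simp

/-- all-Fejer average -/
noncomputable def VF (s : ℕ) (r : (Fin s → ℤ) → ℝ) (τ : Fin s → ℕ) : ℝ := SS s (fun j => FW (τ j)) r

/-- hybrid weights -/
noncomputable def hyb (s k : ℕ) (τ : Fin s → ℕ) : Fin s → ℤ →₀ ℝ :=
  fun j => if (j : ℕ) < k then DW (τ j) else FW (τ j)

lemma hyb_PW (s k : ℕ) (τ : Fin s → ℕ) (hτ : ∀ j, 1 ≤ τ j) (j : Fin s) : PW (hyb s k τ j) := by
  unfold hyb; split_ifs
  · exact PW_DW _ (hτ j)
  · exact PW_FW _ (hτ j)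

lemma VF_step (s : ℕ) (r : (Fin s → ℤ) → ℝ) (hr : Good s r) (τ : Fin s → ℕ) (hτ : ∀ j, 1 ≤ τ j)
    (j : Fin s) (K : ℕ) (hK : 1 ≤ K) :
    VF s r τ ≤ VF s r (Function.update τ j K) + 8 * K / τ j := by
  have e : (fun i => FW (Function.update τ j K i)) = Function.update (fun i => FW (τ i)) j (FW K) := by
    funext i
    rcases eq_or_ne i j with rfl | h <;> simp [*]
  unfold VF
  rw [e, SS_update, SS_iso s _ r j, wav_FW, wav_FW]
  exact Fej_mono _ (iso_pdr s _ j (fun i _ => PW_FW _ (hτ i)) r hr) _ _ (hτ j) hK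

lemma VF_compare (s : ℕ) (r : (Fin s → ℤ) → ℝ) (hr : Good s r) (τ σ : Fin s → ℕ)
    (hτ : ∀ j, 1 ≤ τ j) (hσ : ∀ j, 1 ≤ σ j) :
    VF s r τ ≤ VF s r σ + ∑ j, 8 * (σ j : ℝ) / τ j := by
  have key : ∀ A : Finset (Fin s), VF s r τ ≤ VF s r (A.piecewise σ τ) + ∑ j ∈ A, 8 * (σ j : ℝ) / τ j := by
    intro A
    induction A using Finset.induction_on with
    | empty => simp
    | insert j A hj ih =>
      rw [Finset.piecewise_insert, Finset.sum_insert hj]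
      have h1 : ∀ i, 1 ≤ A.piecewise σ τ i := by
        intro i; unfold Finset.piecewise; split_ifs
        · exact hσ i
        · exact hτ i
      have := VF_step s r hr (A.piecewise σ τ) h1 j (σ j) (hσ j)
      rw [Finset.piecewise_eq_of_notMem _ _ _ hj] at this
      linarith
  simpa using key univ

lemma SS_nonneg_of (s : ℕ) (κ : Fin s → ℤ →₀ ℝ) (hκ : ∀ j, PW (κ j)) (r : (Fin s → ℤ) → ℝ)
    (hr : ∀ h, 0 ≤ r h) : 0 ≤ SS s κ r := by
  induction s with
  | zero => exact hr _
  | succ s ih =>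
    exact Finset.sum_nonneg fun u _ => mul_nonneg ((hκ 0).nonneg u)
      (ih _ (fun j => hκ j.succ) _ fun h => hr _)

lemma VF_nonneg (s : ℕ) (hs : 1 ≤ s) (r : (Fin s → ℤ) → ℝ) (hr : Good s r) (τ : Fin s → ℕ)
    (hτ : ∀ j, 1 ≤ τ j) : 0 ≤ VF s r τ := by
  unfold VF
  rw [SS_iso s _ r ⟨0, hs⟩, wav_FW]
  exact Fej_nonneg _ (iso_pdr s _ _ (fun i _ => PW_FW _ (hτ i)) r hr) _

lemma hyb_limit (s : ℕ) (hs : 1 ≤ s) (r : (Fin s → ℤ) → ℝ) (hr : Good s r) :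
    ∃ B : ℝ, ∀ k ≤ s, ∀ ε > 0, ∃ X : ℕ, 1 ≤ X ∧ ∀ τ : Fin s → ℕ, (∀ j, X ≤ τ j) →
      |SS s (hyb s k τ) r - B| ≤ ε := by
  set 𝒮 : Set ℝ := {v | ∃ τ : Fin s → ℕ, (∀ j, 1 ≤ τ j) ∧ v = VF s r τ} with h𝒮
  have hne : 𝒮.Nonempty := ⟨_, fun _ => 1, fun _ => le_rfl, rfl⟩
  have hbdd : BddBelow 𝒮 := ⟨0, by rintro v ⟨τ, hτ, rfl⟩; exact VF_nonneg s hs r hr τ hτ⟩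
  refine ⟨sInf 𝒮, fun k => ?_⟩
  induction k with
  | zero =>
    intro _ ε hε
    obtain ⟨v, ⟨σ, hσ, rfl⟩, hv⟩ := exists_lt_of_csInf_lt hne (lt_add_of_pos_right (sInf 𝒮) (half_pos hε))
    obtain ⟨X, hX⟩ := exists_nat_gt (2 * (∑ j, 8 * (σ j : ℝ)) / ε)
    have hsum0 : 0 ≤ ∑ j, 8 * (σ j : ℝ) := by positivity
    refine ⟨X + 1, by omega, fun τ hτ => ?_⟩
    have hτ1 : ∀ j, 1 ≤ τ j := fun j => by have := hτ j; omega
    have e : SS s (hyb s 0 τ) r = VF s r τ := by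
      unfold VF
      congr 1
    rw [e]
    have h1 : sInf 𝒮 ≤ VF s r τ := csInf_le hbdd ⟨τ, hτ1, rfl⟩
    have h2 := VF_compare s r hr τ σ hτ1 hσ
    have h3 : ∑ j, 8 * (σ j : ℝ) / τ j ≤ ε / 2 := by
      have hXp : (0:ℝ) < X + 1 := by positivity
      calc ∑ j, 8 * (σ j : ℝ) / τ j ≤ ∑ j, 8 * (σ j : ℝ) / (X + 1) := by
            refine Finset.sum_le_sum fun j _ => ?_
            have : (X + 1 : ℝ) ≤ τ j := by exact_mod_cast hτ j
            gcongr
        _ = (∑ j, 8 * (σ j : ℝ)) / (X + 1) := by rw [Finset.sum_div]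
        _ ≤ ε / 2 := by
            rw [div_le_iff₀ hXp]
            rw [div_lt_iff₀ hε] at hX
            nlinarith
    rw [abs_le]; constructor <;> linarith
  | succ k ih =>
    intro hk ε hε
    set δ := min (ε / 2) (ε ^ 2 / 16) with hδ
    have hδ0 : 0 < δ := by positivity
    obtain ⟨X, hX1, hX⟩ := ih (by omega) δ hδ0
    refine ⟨X, hX1, fun τ hτ => ?_⟩
    have hτ1 : ∀ j, 1 ≤ τ j := fun j => hX1.trans (hτ j)
    set j : Fin s := ⟨k, by omega⟩ with hj
    obtain ⟨Y, hY⟩ := exists_nat_gt (4 * (τ j : ℝ) / δ)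
    set T' := max X (Y + 1) with hT'
    have hT1 : 1 ≤ T' := hX1.trans (le_max_left _ _)
    set q : ℤ → ℝ := fun t => SS s (Function.update (hyb s k τ) j (Finsupp.single t 1)) r with hq
    have hqP : PDR q := iso_pdr s _ j (fun i _ => hyb_PW s k τ hτ1 i) r hr
    have e1 : SS s (hyb s k τ) r = Fej (τ j) q := by
      rw [SS_iso s _ r j]
      simp only [hyb, hj, lt_self_iff_false, if_false]
      rw [wav_FW]
    have e2 : SS s (hyb s k (Function.update τ j T')) r = Fej T' q := by
      have : hyb s k (Function.update τ j T') = Function.update (hyb s k τ) j (FW T') := by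
        funext i
        rcases eq_or_ne i j with rfl | h
        · simp [hyb, hj]
        · simp [hyb, h]
      rw [this, SS_update, wav_FW]
    have e3 : SS s (hyb s (k + 1) τ) r = Dir (τ j) q := by
      have : hyb s (k + 1) τ = Function.update (hyb s k τ) j (DW (τ j)) := by
        funext i
        rcases eq_or_ne i j with rfl | h
        · simp [hyb, hj]
        · have : (i : ℕ) ≠ k := fun h' => h (Fin.ext h')
          have h2 : (i : ℕ) < k + 1 ↔ (i : ℕ) < k := by omega
          simp [hyb, h, h2]
      rw [this, SS_update, wav_DW]
    have h1 := hX τ hτ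
    have h2 := hX (Function.update τ j T') (by
      intro i
      rcases eq_or_ne i j with rfl | h
      · simp [hT']
      · simp [h, hτ i])
    rw [e1] at h1
    rw [e2] at h2
    rw [e3]
    have h3 := Dir_close q hqP (τ j) T' (hτ1 j) hT1
    have h4 : 4 * (τ j : ℝ) / T' ≤ δ := by
      have hT0 : (0 : ℝ) < T' := by exact_mod_cast hT1
      rw [div_le_iff₀ hT0]
      rw [div_lt_iff₀ hδ0] at hY
      have : (Y : ℝ) ≤ T' := by
        have : Y ≤ T' := (Nat.le_succ Y).trans (le_max_right _ _)
        exact_mod_cast this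
      nlinarith
    rw [abs_le] at h1 h2
    have hδa : δ ≤ ε / 2 := min_le_left _ _
    have hδb : δ ≤ ε ^ 2 / 16 := min_le_right _ _
    have h5 : (Dir (τ j) q - Fej T' q) ^ 2 ≤ (ε / 2) ^ 2 := by nlinarith
    have h6 := abs_le.mp (abs_le_of_sq_le_sq h5 (by positivity))
    rw [abs_le]
    constructor <;> linarith [h6.1, h6.2]


lemma sum_Icc_symm (m : ℕ) (q : ℤ → ℝ) :
    ∑ t ∈ Icc (-(m : ℤ)) m, q t =
      ∑ i ∈ range m, q ((m : ℤ) - i) + ∑ k ∈ range (m + 1), q ((k : ℤ) - m) := by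
  have h1 : ∑ t ∈ Icc (-(m : ℤ)) m, q t = ∑ k ∈ range (m + 1 + m), q ((k : ℤ) - m) := by
    symm
    refine Finset.sum_bij (fun k _ => (k : ℤ) - m) ?_ ?_ ?_ ?_
    · intro k hk; simp at hk ⊢; omega
    · intro k _ l _ h; simpa using h
    · intro t ht
      simp at ht
      refine ⟨(t + m).toNat, ?_, ?_⟩
      · simp; omega
      · have : 0 ≤ t + m := by omega
        rw [Int.toNat_of_nonneg this]; ring
    · intros; rfl
  rw [h1, Finset.sum_range_add, add_comm]
  congr 1
  rw [← Finset.sum_range_reflect]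
  refine Finset.sum_congr rfl fun i hi => ?_
  have := mem_range.mp hi
  congr 1
  push_cast
  omega

lemma triangle_sum (H m : ℕ) (hm : m ≤ H) (q : ℤ → ℝ) :
    ∑ t ∈ Ioo (-(H : ℤ)) H, ((m - t.natAbs : ℕ) : ℝ) * q t =
      ∑ i ∈ range m, ∑ k ∈ range m, q ((k : ℤ) - i) := by
  induction m with
  | zero => simp
  | succ m ih =>
    have h1 : ∀ t ∈ Ioo (-(H : ℤ)) H, ((m + 1 - t.natAbs : ℕ) : ℝ) * q t =
        ((m - t.natAbs : ℕ) : ℝ) * q t + if t ∈ Icc (-(m : ℤ)) m then q t else 0 := by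
      intro t _
      by_cases h : t ∈ Icc (-(m : ℤ)) m
      · have h' := h
        simp at h'
        have : m + 1 - t.natAbs = (m - t.natAbs) + 1 := by omega
        rw [if_pos h, this]; push_cast; ring
      · rw [if_neg h]
        simp at h
        have h2 : m + 1 - t.natAbs = 0 := by omega
        have h3 : m - t.natAbs = 0 := by omega
        rw [h2, h3]; simp
    rw [Finset.sum_congr rfl h1, Finset.sum_add_distrib, ih (by omega), ← Finset.sum_filter]
    have h2 : (Ioo (-(H : ℤ)) H).filter (fun t => t ∈ Icc (-(m : ℤ)) m) = Icc (-(m : ℤ)) m := by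
      ext t; simp; omega
    rw [h2, sum_Icc_symm, Finset.sum_range_succ _ m]
    simp only [Finset.sum_range_succ _ m, Finset.sum_add_distrib]
    ring

lemma triangle_le (H m : ℕ) (hm : m ≤ H) (q : ℤ → ℝ) (hq : PDR q) (K : ℕ) (hK : 1 ≤ K) :
    ∑ t ∈ Ioo (-(H : ℤ)) H, ((m - t.natAbs : ℕ) : ℝ) * q t ≤
      (∑ t ∈ Ioo (-(H : ℤ)) H, ((m - t.natAbs : ℕ) : ℝ)) * Fej K q + 8 * K * H := by
  have h1 := triangle_sum H m hm q
  have h2 := triangle_sum H m hm (fun _ => 1)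
  simp only [mul_one, sum_const, card_range, nsmul_eq_mul] at h2
  rw [h1, h2]
  rcases Nat.eq_zero_or_pos m with rfl | hm0
  · simp; positivity
  have hm' : (0 : ℝ) < m := by exact_mod_cast hm0
  have h3 : ∑ i ∈ range m, ∑ k ∈ range m, q ((k : ℤ) - i) = (m : ℝ) ^ 2 * Fej m q := by
    unfold Fej; field_simp
  rw [h3]
  have h4 := Fej_mono q hq m K hm0 hK
  have h5 : (m : ℝ) ≤ H := by exact_mod_cast hm
  calc (m : ℝ) ^ 2 * Fej m q ≤ (m : ℝ) ^ 2 * (Fej K q + 8 * K / m) := by gcongr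
    _ = m * m * Fej K q + 8 * K * m := by field_simp
    _ ≤ _ := by gcongr

/-- Sums against the simplex weight. -/
noncomputable def TT (H : ℕ) : (s : ℕ) → ℕ → ((Fin s → ℤ) → ℝ) → ℝ
  | 0, m, r => m * r Fin.elim0
  | (s + 1), m, r => ∑ t ∈ Ioo (-(H : ℤ)) H, TT H s (m - t.natAbs) (fun h => r (Fin.cons t h))

noncomputable def MM (H s m : ℕ) : ℝ := TT H s m (fun _ => 1)

lemma MM_zero (H m : ℕ) : MM H 0 m = m := by simp [MM, TT]
lemma MM_succ (H s m : ℕ) : MM H (s + 1) m = ∑ t ∈ Ioo (-(H : ℤ)) H, MM H s (m - t.natAbs) := rfl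

lemma MM_nonneg (H s m : ℕ) : 0 ≤ MM H s m := by
  induction s generalizing m with
  | zero => rw [MM_zero]; positivity
  | succ s ih => rw [MM_succ]; exact Finset.sum_nonneg fun t _ => ih _

lemma card_Ioo_le (H : ℕ) : ((Ioo (-(H : ℤ)) H).card : ℝ) ≤ 2 * H := by
  have : (Ioo (-(H : ℤ)) H).card ≤ 2 * H := by simp; omega
  exact_mod_cast this

lemma mix_le (H s m : ℕ) (hm : m ≤ H) (q : ℤ → ℝ) (hq : PDR q) (K : ℕ) (hK : 1 ≤ K) :
    ∑ t ∈ Ioo (-(H : ℤ)) H, MM H s (m - t.natAbs) * q t ≤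
      MM H (s + 1) m * Fej K q + 8 * K * H * (2 * H) ^ s := by
  induction s generalizing m with
  | zero =>
    simp only [MM_succ, MM_zero, pow_zero, mul_one]
    exact triangle_le H m hm q hq K hK
  | succ s ih =>
    rw [MM_succ H (s + 1), Finset.sum_mul]
    simp only [MM_succ H s, Finset.sum_mul]
    rw [Finset.sum_comm]
    have h1 : ∀ t' ∈ Ioo (-(H : ℤ)) H,
        ∑ t ∈ Ioo (-(H : ℤ)) H, MM H s (m - t.natAbs - t'.natAbs) * q t ≤
        (∑ t ∈ Ioo (-(H : ℤ)) H, MM H s (m - t.natAbs - t'.natAbs) * Fej K q)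
          + 8 * K * H * (2 * H) ^ s := by
      intro t' _
      have := ih (m - t'.natAbs) (by omega)
      rw [MM_succ, Finset.sum_mul] at this
      simpa only [Nat.sub_right_comm m] using this
    refine (Finset.sum_le_sum h1).trans ?_
    rw [Finset.sum_add_distrib, sum_const, nsmul_eq_mul, Finset.sum_comm]
    have h2 := card_Ioo_le H
    have : ((Ioo (-(H : ℤ)) H).card : ℝ) * (8 * K * H * (2 * H) ^ s) ≤
      2 * H * (8 * K * H * (2 * H) ^ s) := by gcongr
    have e : 8 * K * H * (2 * (H:ℝ)) ^ (s + 1) = 2 * H * (8 * K * H * (2 * H) ^ s) := by ring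
    rw [e]
    linarith

lemma TT_le (H s m : ℕ) (hm : m ≤ H) (r : (Fin s → ℤ) → ℝ) (hr : Good s r) (K : ℕ) (hK : 1 ≤ K) :
    TT H s m r ≤ MM H s m * VF s r (fun _ => K) + 8 * K * s * (2 * H) ^ s := by
  induction s generalizing m with
  | zero => simp [TT, MM, VF, SS]
  | succ s ih =>
    set q : ℤ → ℝ := fun t => VF s (fun h => r (Fin.cons t h)) (fun _ => K) with hq
    have hqP : PDR q := SS_pdr s _ (fun _ => PW_FW K hK) (fun t h => r (Fin.cons t h)) hr.zero
    have e1 : VF (s + 1) r (fun _ => K) = Fej K q := by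
      simp only [VF, SS]
      rw [wav_FW]
      rfl
    rw [e1]
    simp only [TT]
    have h1 : ∀ t ∈ Ioo (-(H : ℤ)) H, TT H s (m - t.natAbs) (fun h => r (Fin.cons t h)) ≤
        MM H s (m - t.natAbs) * q t + 8 * K * s * (2 * H) ^ s := fun t _ =>
      ih (m - t.natAbs) (by omega) _ (hr.tail t)
    refine (Finset.sum_le_sum h1).trans ?_
    rw [Finset.sum_add_distrib, sum_const, nsmul_eq_mul]
    have h2 := mix_le H s m hm q hqP K hK
    have h3 : ((Ioo (-(H : ℤ)) H).card : ℝ) * (8 * K * s * (2 * H) ^ s) ≤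
      2 * H * (8 * K * s * (2 * H) ^ s) := by
      gcongr; exact card_Ioo_le H
    have e : 8 * K * ((s + 1 : ℕ) : ℝ) * (2 * (H:ℝ)) ^ (s + 1) =
      2 * H * (8 * K * s * (2 * H) ^ s) + 2 * (8 * K * H * (2 * H) ^ s) := by push_cast; ring
    have h4 : 0 ≤ 8 * K * H * (2 * (H:ℝ)) ^ s := by positivity
    rw [e]
    linarith

lemma sum_pow_ge (m p : ℕ) : (m : ℝ) ^ (p + 1) / (p + 1) ≤ ∑ j ∈ range m, ((j : ℝ) + 1) ^ p := by
  induction m with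
  | zero => simp
  | succ m ih =>
    rw [Finset.sum_range_succ]
    have hp : (0 : ℝ) < p + 1 := by positivity
    rw [div_le_iff₀ hp] at ih ⊢
    push_cast
    have hm : (0 : ℝ) < m + 1 := by positivity
    have key : ((m : ℝ) + 1) ^ (p + 1) - m ^ (p + 1) ≤ ((m : ℝ) + 1) ^ p * (p + 1) := by
      have hb := one_add_mul_le_pow (a := -(1 : ℝ) / (m + 1)) (by
        rw [le_div_iff₀ hm]; nlinarith [(Nat.cast_nonneg m : (0:ℝ) ≤ m)]) (p + 1)
      have e : (1 + -(1 : ℝ) / (m + 1)) = m / (m + 1) := by field_simp; ring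
      rw [e, div_pow, le_div_iff₀ (by positivity)] at hb
      push_cast at hb
      have e2 : (1 + ((p : ℝ) + 1) * (-1 / (m + 1))) * (m + 1) ^ (p + 1) =
        (m + 1) ^ (p + 1) - (m + 1) ^ p * (p + 1) := by
        rw [pow_succ]; field_simp; ring
      linarith
    linarith

lemma MM_lower (H s m : ℕ) (hm : m ≤ H) : (m : ℝ) ^ (s + 1) / (s + 1).factorial ≤ MM H s m := by
  induction s generalizing m with
  | zero => simp [MM_zero]
  | succ s ih =>
    rw [MM_succ]
    have h1 : ∑ j ∈ range m, MM H s (j + 1) ≤ ∑ t ∈ Ioo (-(H : ℤ)) H, MM H s (m - t.natAbs) := by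
      have e : ∑ j ∈ range m, MM H s (j + 1) =
          ∑ t ∈ (range m).map Nat.castEmbedding, MM H s (m - (t : ℤ).natAbs) := by
        rw [Finset.sum_map, ← Finset.sum_range_reflect]
        refine Finset.sum_congr rfl fun i hi => ?_
        have := mem_range.mp hi
        congr 1
        simp
        omega
      rw [e]
      refine Finset.sum_le_sum_of_subset_of_nonneg ?_ fun t _ _ => MM_nonneg _ _ _
      intro t ht
      simp at ht ⊢
      obtain ⟨i, hi, rfl⟩ := ht
      omega
    refine le_trans ?_ h1
    have h2 : ∑ j ∈ range m, ((j : ℝ) + 1) ^ (s + 1) / (s + 1).factorial ≤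
        ∑ j ∈ range m, MM H s (j + 1) := by
      refine Finset.sum_le_sum fun j hj => ?_
      have := ih (j + 1) (by have := mem_range.mp hj; omega)
      push_cast at this
      exact this
    refine le_trans ?_ h2
    rw [← Finset.sum_div, Nat.factorial_succ (s + 1)]
    have := sum_pow_ge m (s + 1)
    push_cast at this ⊢
    rw [← div_div]
    gcongr


/-- Multiplicative derivative. -/
noncomputable def dl (t : ℤ) (f : ℤ → ℂ) : ℤ → ℂ := fun n => f (n + t) * (starRingEnd ℂ) (f n)

/-- Recursive cube products. -/
noncomputable def QQ : (s : ℕ) → (ℤ → ℂ) → (Fin s → ℤ) → ℤ → ℂ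
  | 0, f, _, n => f n
  | (s + 1), f, h, n => QQ s (dl (h 0) f) (Fin.tail h) n

noncomputable def GG (H : ℕ) : (s : ℕ) → (ℤ → ℂ) → ℂ
  | 0, f => ∑ m ∈ Ico (0 : ℤ) H, f m
  | (s + 1), f => ∑ t ∈ Ioo (-(H : ℤ)) H, GG H s (dl t f)

lemma GG_zero (H s : ℕ) (f : ℤ → ℂ) (hf : ∀ n, f n = 0) : GG H s f = 0 := by
  induction s generalizing f with
  | zero => simp [GG, hf]
  | succ s ih => exact Finset.sum_eq_zero fun t _ => ih _ fun n => by simp [dl, hf]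

lemma gowersNorm_nonneg (L s : ℕ) (F : ℕ → ℂ) : 0 ≤ gowersNorm L (s + 1) F := by
  induction s generalizing F with
  | zero => rw [gowersNorm]; positivity
  | succ s ih =>
    rw [gowersNorm]
    refine Real.rpow_nonneg (mul_nonneg (by positivity) (Finset.sum_nonneg fun h _ => ?_)) _
    exact pow_nonneg (ih _) _

lemma gowersNorm_pow (L s : ℕ) (F : ℕ → ℂ) :
    gowersNorm L (s + 2) F ^ (2 ^ (s + 2)) = (L : ℝ)⁻¹ * ∑ h ∈ Finset.range L,
        gowersNorm L (s + 1)
          (fun n => F ((n + h) % L) * (starRingEnd ℂ) (F (n % L))) ^ (2 ^ (s + 1)) := by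
  rw [gowersNorm]
  have : ((2 : ℝ) ^ (s + 2))⁻¹ = (((2 ^ (s + 2) : ℕ)) : ℝ)⁻¹ := by push_cast; rfl
  rw [this, Real.rpow_inv_natCast_pow]
  · refine mul_nonneg (by positivity) (Finset.sum_nonneg fun h _ => ?_)
    exact pow_nonneg (gowersNorm_nonneg _ _ _) _
  · positivity

lemma sum_range_int (n : ℕ) (f : ℤ → ℂ) : ∑ m ∈ range n, f m = ∑ m ∈ Ico (0 : ℤ) n, f m := by
  refine Finset.sum_bij (fun k _ => (k : ℤ)) ?_ ?_ ?_ ?_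
  · intro k hk; simp at hk ⊢; omega
  · intro k _ l _ h; simpa using h
  · intro t ht
    simp at ht
    exact ⟨t.toNat, by simp; omega, by simp; omega⟩
  · intros; rfl

lemma sum_window (H : ℕ) (f : ℤ → ℂ) (hf : ∀ n, n ∉ Ico (0 : ℤ) H → f n = 0) (A : Finset ℤ)
    (hA : Ico (0 : ℤ) H ⊆ A) : ∑ x ∈ A, f x = ∑ x ∈ Ico (0 : ℤ) H, f x :=
  (Finset.sum_subset hA fun x _ hx => hf x hx).symm

lemma GG_one (H : ℕ) (f : ℤ → ℂ) (hf : ∀ n, n ∉ Ico (0 : ℤ) H → f n = 0) :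
    GG H 1 f = (∑ m ∈ Ico (0 : ℤ) H, f m) * (starRingEnd ℂ) (∑ m ∈ Ico (0 : ℤ) H, f m) := by
  simp only [GG, dl]
  rw [Finset.sum_comm, map_sum, Finset.mul_sum]
  refine Finset.sum_congr rfl fun m hm => ?_
  rw [← Finset.sum_mul]
  congr 1
  simp only [mem_Ico] at hm
  rw [← sum_window H f hf (Ioo (m - H) (m + H)) (by intro x; simp; omega)]
  refine Finset.sum_bij (fun t _ => m + t) ?_ ?_ ?_ ?_
  · intro k hk; simp at hk ⊢; omega
  · intro k _ l _ h; simpa using h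
  · intro t ht
    simp at ht
    exact ⟨t - m, by simp; omega, by ring⟩
  · intros; rfl

lemma sum_range_two (H : ℕ) (φ : ℕ → ℂ) :
    ∑ h ∈ range (2 * H), φ h =
      ∑ t ∈ Ico (-(H : ℤ)) H, φ (if 0 ≤ t then t.toNat else (t + 2 * H).toNat) := by
  symm
  refine Finset.sum_bij (fun t _ => if 0 ≤ t then t.toNat else (t + 2 * H).toNat) ?_ ?_ ?_ ?_
  · intro t ht
    simp at ht
    split_ifs <;> simp <;> omega
  · intro t ht t' ht' h
    simp at ht ht'
    split_ifs at h <;> omega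
  · intro h hh
    simp at hh
    by_cases h1 : h < H
    · exact ⟨h, by simp; omega, by simp⟩
    · refine ⟨h - 2 * H, by simp; omega, ?_⟩
      rw [if_neg (by omega)]; simp
  · intros; rfl

lemma gowers_eq (H : ℕ) (hH : 1 ≤ H) (s : ℕ) (f : ℤ → ℂ)
    (hf : ∀ n, n ∉ Ico (0 : ℤ) H → f n = 0) (F : ℕ → ℂ) (hF : ∀ n < 2 * H, F n = f n) :
    ((gowersNorm (2 * H) (s + 1) F ^ (2 ^ (s + 1)) : ℝ) : ℂ) * ((2 * H : ℕ) : ℂ) ^ (s + 2) =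
      GG H (s + 1) f := by
  have hL : ((2 * H : ℕ) : ℂ) ≠ 0 := by
    have : 2 * H ≠ 0 := by omega
    exact_mod_cast this
  have hH0 : (H : ℂ) ≠ 0 := by
    have : H ≠ 0 := by omega
    exact_mod_cast this
  induction s generalizing f F with
  | zero =>
    rw [GG_one H f hf, gowersNorm]
    have h1 : ∑ m ∈ range (2 * H), F (m % (2 * H)) = ∑ m ∈ Ico (0 : ℤ) H, f m := by
      have : ∀ m ∈ range (2 * H), F (m % (2 * H)) = f m := by
        intro m hm
        have hm := mem_range.mp hm
        rw [Nat.mod_eq_of_lt hm, hF m hm]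
      rw [Finset.sum_congr rfl this, sum_range_int]
      exact sum_window H f hf _ (by intro x; simp; omega)
    rw [h1, Complex.mul_conj]
    rw [Complex.normSq_eq_norm_sq, norm_mul, norm_inv, Complex.norm_natCast]
    push_cast at hL ⊢
    field_simp
  | succ s ih =>
    rw [gowersNorm_pow]
    have h1 : ∀ t ∈ Ico (-(H : ℤ)) H,
        ((gowersNorm (2 * H) (s + 1) (fun n => F ((n + (if 0 ≤ t then t.toNat else (t + 2 * H).toNat)) % (2 * H))
          * (starRingEnd ℂ) (F (n % (2 * H)))) ^ (2 ^ (s + 1)) : ℝ) : ℂ) * ((2 * H : ℕ) : ℂ) ^ (s + 2)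
        = GG H (s + 1) (dl t f) := by
      intro t ht
      simp only [mem_Ico] at ht
      apply ih
      · intro n hn
        simp [dl, hf n hn]
      · intro n hn
        rw [Nat.mod_eq_of_lt hn, hF n hn, dl]
        by_cases hnH : n < H
        · congr 1
          by_cases h0 : 0 ≤ t
          · rw [if_pos h0, Nat.mod_eq_of_lt (by omega), hF _ (by omega)]
            congr 1; push_cast; omega
          · rw [if_neg h0]
            by_cases h2 : 0 ≤ n + t
            · have e : (n + (t + 2 * H).toNat) = (n + t).toNat + 2 * H := by omega
              rw [e, Nat.add_mod_right, Nat.mod_eq_of_lt (by omega), hF _ (by omega)]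
              congr 1; omega
            · rw [Nat.mod_eq_of_lt (by omega), hF _ (by omega), hf, hf]
              · simp; omega
              · simp; omega
        · rw [hf n (by simp; omega)]; simp
    have h2 : (((∑ h ∈ range (2 * H), gowersNorm (2 * H) (s + 1) (fun n => F ((n + h) % (2 * H))
          * (starRingEnd ℂ) (F (n % (2 * H)))) ^ (2 ^ (s + 1)) : ℝ)) : ℂ) * ((2 * H : ℕ) : ℂ) ^ (s + 2)
        = GG H (s + 2) f := by
      rw [Complex.ofReal_sum, Finset.sum_mul, sum_range_two, Finset.sum_congr rfl h1]
      have e : Ico (-(H : ℤ)) H = insert (-(H : ℤ)) (Ioo (-(H : ℤ)) H) := by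
        ext x; simp; omega
      rw [e, Finset.sum_insert (by simp), GG_zero, zero_add]
      · rfl
      · intro n
        rw [dl]
        by_cases hn : n ∈ Ico (0 : ℤ) H
        · rw [hf (n + -H) (by simp at hn ⊢; omega)]; simp
        · rw [hf n hn]; simp
    rw [← h2, Complex.ofReal_mul, pow_succ _ (s + 2)]
    push_cast at hL ⊢
    field_simp

lemma dl_ind (x y t : ℤ) (g : ℤ → ℂ) :
    dl t (fun m => if x ≤ m ∧ m < y then g m else 0) =
      fun m => if max x (x - t) ≤ m ∧ m < min y (y - t) then dl t g m else 0 := by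
  funext m
  simp only [dl]
  by_cases h1 : x ≤ m ∧ m < y
  · by_cases h2 : x ≤ m + t ∧ m + t < y
    · rw [if_pos h1, if_pos h2, if_pos]; omega
    · rw [if_pos h1, if_neg h2, if_neg, zero_mul]; omega
  · rw [if_neg h1, map_zero, mul_zero, if_neg]; omega

lemma GG_ind (H s : ℕ) (x y : ℤ) (hx : 0 ≤ x) (hy : y ≤ H) :
    GG H s (fun m => if x ≤ m ∧ m < y then 1 else 0) = (MM H s (y - x).toNat : ℂ) := by
  induction s generalizing x y with
  | zero =>
    rw [MM_zero, GG, ← Finset.sum_filter]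
    have : (Ico (0 : ℤ) H).filter (fun m => x ≤ m ∧ m < y) = Ico x y := by
      ext m; simp; omega
    rw [this]; simp
  | succ s ih =>
    rw [MM_succ, GG, Complex.ofReal_sum]
    refine Finset.sum_congr rfl fun t _ => ?_
    rw [dl_ind x y t (fun _ => 1)]
    have e : dl t (fun _ => (1 : ℂ)) = fun _ => 1 := by funext m; simp [dl]
    rw [e, ih _ _ (by omega) (by omega)]
    congr 3
    omega


/-- Real averages over `I N`. -/
noncomputable def avR (I : ℕ → Finset ℕ) (φ : ℤ → ℝ) (N : ℕ) : ℝ :=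
  ((I N).card : ℝ)⁻¹ * ∑ n ∈ I N, φ n

lemma avR_sum (I : ℕ → Finset ℕ) {ι : Type*} (A : Finset ι) (φ : ι → ℤ → ℝ) (N : ℕ) :
    avR I (fun n => ∑ i ∈ A, φ i n) N = ∑ i ∈ A, avR I (φ i) N := by
  unfold avR
  rw [Finset.sum_comm, Finset.mul_sum]

lemma avR_smul (I : ℕ → Finset ℕ) (x : ℝ) (φ : ℤ → ℝ) (N : ℕ) :
    avR I (fun n => x * φ n) N = x * avR I φ N := by
  unfold avR
  rw [← Finset.mul_sum]; ring

lemma avR_nonneg (I : ℕ → Finset ℕ) (φ : ℤ → ℝ) (hφ : ∀ n, 0 ≤ φ n) (N : ℕ) : 0 ≤ avR I φ N :=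
  mul_nonneg (by positivity) (Finset.sum_nonneg fun n _ => hφ n)

lemma avR_le (I : ℕ → Finset ℕ) (φ : ℤ → ℝ) (C : ℝ) (hC : 0 ≤ C) (hφ : ∀ n, φ n ≤ C) (N : ℕ) :
    avR I φ N ≤ C := by
  unfold avR
  rcases Nat.eq_zero_or_pos (I N).card with h | h
  · simp [h, hC]
  · rw [inv_mul_le_iff₀ (by exact_mod_cast h)]
    have := Finset.sum_le_sum (s := I N) (f := fun n : ℕ => φ n) (g := fun _ => C) (fun n _ => hφ n)
    refine this.trans (by simp)


lemma avR_shift_one (lo hi : ℕ → ℕ) (I : ℕ → Finset ℕ) (hI : ∀ N, I N = Finset.Icc (lo N) (hi N))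
    (hIcard : Tendsto (fun N => (I N).card) atTop atTop)
    (φ : ℤ → ℝ) (C : ℝ) (hφ : ∀ n, |φ n| ≤ C) :
    Tendsto (fun N => avR I (fun n => φ (n + 1)) N - avR I φ N) atTop (𝓝 0) := by
  have h1 : Tendsto (fun N => ((I N).card : ℝ)⁻¹ * (2 * C)) atTop (𝓝 0) := by
    have : Tendsto (fun N => ((I N).card : ℝ)⁻¹) atTop (𝓝 0) :=
      tendsto_inv_atTop_zero.comp (tendsto_natCast_atTop_atTop.comp hIcard)
    simpa using this.mul_const (2 * C)
  refine squeeze_zero_norm (fun N => ?_) h1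
  unfold avR
  rw [← mul_sub, ← Finset.sum_sub_distrib, norm_mul, norm_inv, Real.norm_natCast]
  refine mul_le_mul_of_nonneg_left ?_ (by positivity)
  have hC : 0 ≤ C := (abs_nonneg _).trans (hφ 0)
  rw [hI N]
  by_cases h : lo N ≤ hi N + 1
  · have : ∑ n ∈ Icc (lo N) (hi N), (φ ((n : ℤ) + 1) - φ n) = φ ((hi N + 1 : ℕ)) - φ (lo N) := by
      have e : Icc (lo N) (hi N) = Ico (lo N) (hi N + 1) := by ext; simp
      rw [e]
      have := Finset.sum_Ico_sub (fun n : ℕ => φ n) h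
      push_cast at this ⊢
      exact this
    rw [this]
    refine (norm_sub_le _ _).trans ?_
    have := hφ ((hi N + 1 : ℕ))
    have := hφ (lo N)
    simp only [Real.norm_eq_abs]
    linarith
  · rw [Finset.Icc_eq_empty (by omega)]
    simp; exact hC

lemma avR_shift_nat (lo hi : ℕ → ℕ) (I : ℕ → Finset ℕ) (hI : ∀ N, I N = Finset.Icc (lo N) (hi N))
    (hIcard : Tendsto (fun N => (I N).card) atTop atTop)
    (φ : ℤ → ℝ) (C : ℝ) (hφ : ∀ n, |φ n| ≤ C) (k : ℕ) :
    Tendsto (fun N => avR I (fun n => φ (n + k)) N - avR I φ N) atTop (𝓝 0) := by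
  induction k with
  | zero => simp
  | succ k ih =>
    have h := avR_shift_one lo hi I hI hIcard (fun n => φ (n + k)) C (fun n => hφ _)
    have := h.add ih
    simp only [sub_add_sub_cancel, add_zero] at this
    refine this.congr fun N => ?_
    congr 2
    funext n
    push_cast
    congr 1; ring

lemma avR_shift (lo hi : ℕ → ℕ) (I : ℕ → Finset ℕ) (hI : ∀ N, I N = Finset.Icc (lo N) (hi N))
    (hIcard : Tendsto (fun N => (I N).card) atTop atTop)
    (φ : ℤ → ℝ) (C : ℝ) (hφ : ∀ n, |φ n| ≤ C) (k : ℤ) (l : ℝ)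
    (hl : Tendsto (avR I φ) atTop (𝓝 l)) :
    Tendsto (avR I (fun n => φ (n + k))) atTop (𝓝 l) := by
  rcases le_total 0 k with h | h
  · lift k to ℕ using h
    have := (avR_shift_nat lo hi I hI hIcard φ C hφ k).add hl
    simpa using this
  · obtain ⟨m, hm⟩ := Int.eq_ofNat_of_zero_le (neg_nonneg.mpr h)
    have := avR_shift_nat lo hi I hI hIcard (fun n => φ (n + k)) C (fun n => hφ _) m
    have e : (fun n : ℤ => φ (n + m + k)) = φ := by
      funext n; congr 1; omega
    rw [e] at this
    have := hl.sub this
    simpa using this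


lemma norm_dl_le (f : ℤ → ℂ) (hf : ∀ n, ‖f n‖ ≤ 1) (t n : ℤ) : ‖dl t f n‖ ≤ 1 := by
  rw [dl, norm_mul, RCLike.norm_conj]
  exact mul_le_one₀ (hf _) (norm_nonneg _) (hf _)

lemma norm_QQ_le (s : ℕ) (f : ℤ → ℂ) (hf : ∀ n, ‖f n‖ ≤ 1) (h : Fin s → ℤ) (n : ℤ) :
    ‖QQ s f h n‖ ≤ 1 := by
  induction s generalizing f with
  | zero => exact hf n
  | succ s ih => exact ih _ (norm_dl_le f hf _) _

lemma dl_comm (u t : ℤ) (f : ℤ → ℂ) : dl u (dl t f) = dl t (dl u f) := by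
  funext n
  simp only [dl, map_mul]
  rw [add_right_comm]; ring

lemma QQ_dl (s : ℕ) (f : ℤ → ℂ) (t : ℤ) (h : Fin s → ℤ) (n : ℤ) :
    QQ s (dl t f) h n = QQ s f h (n + t) * (starRingEnd ℂ) (QQ s f h n) := by
  induction s generalizing f with
  | zero => rfl
  | succ s ih =>
    simp only [QQ]
    rw [dl_comm, ih]

lemma QQ_coord (s : ℕ) (f : ℤ → ℂ) (hf : ∀ n, ‖f n‖ ≤ 1) (j : Fin s) (h : Fin s → ℤ) :
    ∃ g : ℤ → ℂ, (∀ n, ‖g n‖ ≤ 1) ∧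
      ∀ t n, QQ s f (Function.update h j t) n = g (n + t) * (starRingEnd ℂ) (g n) := by
  induction s generalizing f with
  | zero => exact j.elim0
  | succ s ih =>
    refine Fin.cases ?_ (fun j => ?_) j
    · refine ⟨QQ s f (Fin.tail h), norm_QQ_le s f hf _, fun t n => ?_⟩
      simp only [QQ, Function.update_self, Fin.tail_update_zero]
      exact QQ_dl s f t _ n
    · obtain ⟨g, hg1, hg⟩ := ih (dl (h 0) f) (norm_dl_le f hf _) j (Fin.tail h)
      refine ⟨g, hg1, fun t n => ?_⟩
      simp only [QQ, Fin.tail_update_succ]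
      rw [Function.update_of_ne (Fin.succ_ne_zero j).symm]
      exact hg t n

lemma QQ_conj_shift (s : ℕ) (f : ℤ → ℂ) (k : ℤ) (h : Fin s → ℤ) (n : ℤ) :
    QQ s (fun n => (starRingEnd ℂ) (f (n + k))) h n = (starRingEnd ℂ) (QQ s f h (n + k)) := by
  induction s generalizing f with
  | zero => rfl
  | succ s ih =>
    simp only [QQ]
    rw [← ih]
    congr 1
    funext n
    simp only [dl, map_mul]
    rw [add_right_comm]


lemma lim_int (lo hi : ℕ → ℕ) (I : ℕ → Finset ℕ) (hI : ∀ N, I N = Finset.Icc (lo N) (hi N))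
    (hIcard : Tendsto (fun N => (I N).card) atTop atTop)
    (s : ℕ) (f : ℤ → ℂ) (hf : ∀ n, ‖f n‖ ≤ 1) (r : (Fin s → ℕ) → ℝ)
    (hr : ∀ h : Fin s → ℕ, Tendsto (avR I (fun n => (QQ s f (fun j => (h j : ℤ)) n).re)) atTop (𝓝 (r h)))
    (h : Fin s → ℤ) :
    Tendsto (avR I (fun n => (QQ s f h n).re)) atTop (𝓝 (r fun j => (h j).natAbs)) := by
  induction s generalizing f with
  | zero =>
    have e : (fun j => (h j).natAbs) = (Fin.elim0 : Fin 0 → ℕ) := Subsingleton.elim _ _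
    rw [e]
    exact hr Fin.elim0
  | succ s ih =>
    have key := ih (dl ((h 0).natAbs) f) (norm_dl_le f hf _) (fun h' => r (Fin.cons (h 0).natAbs h'))
      (fun h' => by
        have := hr (Fin.cons (h 0).natAbs h')
        simp only [QQ, Fin.cons_zero] at this
        exact this) (Fin.tail h)
    have e : (Fin.cons (h 0).natAbs (fun j => (Fin.tail h j).natAbs) : Fin (s + 1) → ℕ)
        = fun j => (h j).natAbs := by
      funext j
      refine Fin.cases ?_ (fun j => ?_) j <;> simp [Fin.tail]
    simp only [e] at key
    rcases le_total 0 (h 0) with h0 | h0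
    · rw [Int.natAbs_of_nonneg h0] at key
      exact key
    · have h1 : ((h 0).natAbs : ℤ) = - h 0 := by omega
      have e2 : dl (h 0) f = fun n => (starRingEnd ℂ) (dl ((h 0).natAbs) f (n + h 0)) := by
        funext n
        simp only [dl, map_mul, h1]
        rw [add_neg_cancel_right]
        simp [mul_comm]
      have := avR_shift lo hi I hI hIcard _ 1 (fun n => (Complex.abs_re_le_norm _).trans
        (norm_QQ_le s _ (norm_dl_le f hf _) _ _)) (h 0) _ key
      refine this.congr fun N => ?_
      congr 1
      funext n
      simp only [QQ]
      rw [e2, QQ_conj_shift, Complex.conj_re]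

lemma good_of_lim (lo hi : ℕ → ℕ) (I : ℕ → Finset ℕ) (hI : ∀ N, I N = Finset.Icc (lo N) (hi N))
    (hIcard : Tendsto (fun N => (I N).card) atTop atTop)
    (s : ℕ) (f : ℤ → ℂ) (hf : ∀ n, ‖f n‖ ≤ 1) (r : (Fin s → ℤ) → ℝ)
    (hr : ∀ h, Tendsto (avR I (fun n => (QQ s f h n).re)) atTop (𝓝 (r h))) : Good s r := by
  intro j h
  obtain ⟨g, hg1, hg⟩ := QQ_coord s f hf j h
  have hlim : ∀ t k, Tendsto (avR I (fun n => (g (n + k + t) * (starRingEnd ℂ) (g (n + k))).re)) atTop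
      (𝓝 (r (Function.update h j t))) := by
    intro t k
    have h1 := hr (Function.update h j t)
    simp only [hg] at h1
    refine avR_shift lo hi I hI hIcard (fun n => (g (n + t) * (starRingEnd ℂ) (g n)).re) 1 ?_ k _ h1
    intro n
    refine (Complex.abs_re_le_norm _).trans ?_
    exact norm_dl_le g hg1 t n
  constructor
  · intro t
    refine tendsto_nhds_unique (hlim (-t) t) ?_
    refine (hlim t 0).congr fun N => ?_
    congr 1
    funext n
    rw [add_neg_cancel_right, add_zero]
    simp only [Complex.mul_re, Complex.conj_re, Complex.conj_im]
    ring
  · refine le_of_tendsto' (hlim 0 0) fun N => avR_le I _ 1 zero_le_one (fun n => ?_) N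
    exact (Complex.re_le_norm _).trans (norm_dl_le g hg1 0 (n + 0))
  · intro w
    have h1 : Tendsto (fun N => ∑ i ∈ w.support, ∑ k ∈ w.support, w i * w k *
        avR I (fun n => (g (n + i + (k - i)) * (starRingEnd ℂ) (g (n + i))).re) N) atTop
        (𝓝 (w.sum fun i x => w.sum fun k y => x * y * r (Function.update h j (k - i)))) := by
      refine tendsto_finsetSum _ fun i _ => tendsto_finsetSum _ fun k _ => ?_
      exact (hlim (k - i) i).const_mul _
    refine ge_of_tendsto' h1 fun N => ?_
    have e : ∑ i ∈ w.support, ∑ k ∈ w.support, w i * w k *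
        avR I (fun n => (g (n + i + (k - i)) * (starRingEnd ℂ) (g (n + i))).re) N =
        avR I (fun n => ‖∑ k ∈ w.support, (w k : ℂ) * g (n + k)‖ ^ 2) N := by
      simp only [← avR_smul, ← avR_sum]
      congr 1
      funext n
      have e1 : ∀ z : ℂ, ‖z‖ ^ 2 = (z * (starRingEnd ℂ) z).re := by
        intro z; rw [Complex.mul_conj, Complex.ofReal_re, Complex.normSq_eq_norm_sq]
      rw [e1, map_sum, Finset.sum_mul_sum, Complex.re_sum]
      simp only [Complex.re_sum]
      rw [Finset.sum_comm]
      refine Finset.sum_congr rfl fun i _ => Finset.sum_congr rfl fun k _ => ?_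
      have e2 : n + k + (i - k) = n + i := by ring
      rw [e2, map_mul, Complex.conj_ofReal]
      have e3 : (w i : ℂ) * g (n + i) * ((w k : ℂ) * (starRingEnd ℂ) (g (n + k))) =
        ((w i * w k : ℝ) : ℂ) * (g (n + i) * (starRingEnd ℂ) (g (n + k))) := by push_cast; ring
      rw [e3, Complex.re_ofReal_mul]
      ring
    rw [e]
    exact avR_nonneg I _ (fun n => by positivity) N

lemma lim_GG (lo hi : ℕ → ℕ) (I : ℕ → Finset ℕ) (hI : ∀ N, I N = Finset.Icc (lo N) (hi N))
    (hIcard : Tendsto (fun N => (I N).card) atTop atTop)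
    (H s : ℕ) (g : ℤ → ℂ) (hg : ∀ n, ‖g n‖ ≤ 1) (r : (Fin s → ℤ) → ℝ)
    (hr : ∀ h, Tendsto (avR I (fun n => (QQ s g h n).re)) atTop (𝓝 (r h)))
    (x y : ℤ) (hx : 0 ≤ x) (hy : y ≤ H) :
    Tendsto (avR I (fun n => (GG H s (fun m => if x ≤ m ∧ m < y then g (n + 1 + m) else 0)).re)) atTop
      (𝓝 (TT H s (y - x).toNat r)) := by
  induction s generalizing g x y with
  | zero =>
    have h1 : (Ico (0 : ℤ) H).filter (fun m => x ≤ m ∧ m < y) = Ico x y := by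
      ext m; simp; omega
    simp only [GG, ← Finset.sum_filter, h1, Complex.re_sum, TT]
    have h2 : Tendsto (fun N => ∑ m ∈ Ico x y, avR I (fun n => (g (n + 1 + m)).re) N) atTop
        (𝓝 (∑ m ∈ Ico x y, r Fin.elim0)) := by
      refine tendsto_finsetSum _ fun m _ => ?_
      have := avR_shift lo hi I hI hIcard (fun n => (g n).re) 1
        (fun n => (Complex.abs_re_le_norm _).trans (hg n)) (1 + m) _ (hr Fin.elim0)
      simpa only [add_assoc] using this
    simp only [sum_const, Int.card_Ico, nsmul_eq_mul] at h2
    refine h2.congr fun N => ?_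
    rw [avR_sum]
  | succ s ih =>
    simp only [GG, TT, Complex.re_sum]
    have h2 : Tendsto (fun N => ∑ t ∈ Ioo (-(H : ℤ)) H, avR I (fun n => (GG H s (dl t
        (fun m => if x ≤ m ∧ m < y then g (n + 1 + m) else 0))).re) N) atTop
        (𝓝 (∑ t ∈ Ioo (-(H : ℤ)) H, TT H s ((y - x).toNat - t.natAbs) (fun h => r (Fin.cons t h)))) := by
      refine tendsto_finsetSum _ fun t _ => ?_
      have := ih (dl t g) (norm_dl_le g hg t) (fun h => r (Fin.cons t h)) (fun h => by
        have := hr (Fin.cons t h)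
        simp only [QQ, Fin.cons_zero, Fin.tail_cons] at this
        exact this) (max x (x - t)) (min y (y - t)) (by omega) (by omega)
      have e : (min y (y - t) - max x (x - t)).toNat = (y - x).toNat - t.natAbs := by omega
      rw [e] at this
      refine this.congr fun N => ?_
      congr 1
      funext n
      rw [dl_ind x y t (fun m => g (n + 1 + m))]
      simp only [dl, add_assoc]
    refine h2.congr fun N => ?_
    rw [avR_sum]



lemma prod_cons_bool (s : ℕ) (G : (Fin (s + 1) → Bool) → ℂ) :
    ∏ ε : Fin (s + 1) → Bool, G ε =
      (∏ ε : Fin s → Bool, G (Fin.cons true ε)) * ∏ ε : Fin s → Bool, G (Fin.cons false ε) := by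
  rw [← Fintype.prod_equiv (Fin.consEquiv (fun _ : Fin (s + 1) => Bool))
    (fun p => G (Fin.cons p.1 p.2)) G (fun p => rfl)]
  rw [Fintype.prod_prod_type]
  simp

lemma epsDot_cons (s : ℕ) (b : Bool) (ε : Fin s → Bool) (h : Fin (s + 1) → ℕ) :
    epsDot (Fin.cons b ε : Fin (s + 1) → Bool) h = (if b then h 0 else 0) + epsDot ε (Fin.tail h) := by
  simp [epsDot, Fin.sum_univ_succ, Fin.tail]

lemma boolcard_cons (s : ℕ) (b : Bool) (ε : Fin s → Bool) :
    (Finset.univ.filter fun j => (Fin.cons b ε : Fin (s + 1) → Bool) j = true).card =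
      (if b then 1 else 0) + (Finset.univ.filter fun j => ε j = true).card := by
  simp only [Finset.card_filter, Fin.sum_univ_succ, Fin.cons_zero, Fin.cons_succ]

lemma QQ_prod (s : ℕ) (f : ℤ → ℂ) (h : Fin s → ℕ) (n : ℤ) :
    QQ s f (fun j => (h j : ℤ)) n = ∏ ε : Fin s → Bool,
      if (s + (Finset.univ.filter fun j => ε j = true).card) % 2 = 1 then
        (starRingEnd ℂ) (f (n + (epsDot ε h : ℕ))) else f (n + (epsDot ε h : ℕ)) := by
  induction s generalizing n with
  | zero => simp [QQ, epsDot]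
  | succ s ih =>
    have e : (Fin.tail fun j => (h j : ℤ)) = fun j => ((Fin.tail h j : ℕ) : ℤ) := rfl
    rw [QQ, QQ_dl, e, ih, ih, map_prod, prod_cons_bool]
    congr 1
    · refine Finset.prod_congr rfl fun ε _ => ?_
      rw [epsDot_cons, boolcard_cons]
      have h1 : (s + 1 + ((if (true : Bool) = true then 1 else 0) + (Finset.univ.filter fun j => ε j = true).card)) % 2
        = (s + (Finset.univ.filter fun j => ε j = true).card) % 2 := by simp; omega
      rw [h1]
      simp [add_assoc]
    · refine Finset.prod_congr rfl fun ε _ => ?_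
      rw [epsDot_cons, boolcard_cons]
      by_cases h1 : (s + (Finset.univ.filter fun j => ε j = true).card) % 2 = 1
      · have h2 : ¬ (s + 1 + (Finset.univ.filter fun j => ε j = true).card) % 2 = 1 := by omega
        simp [h1, h2]
      · have h2 : (s + 1 + (Finset.univ.filter fun j => ε j = true).card) % 2 = 1 := by omega
        simp [h1, h2]

/-- Extension of a sequence to the integers. -/
noncomputable def zext (a : ℕ → ℂ) : ℤ → ℂ := fun n => a n.toNat

lemma QQ_cube (s : ℕ) (a : ℕ → ℂ) (h : Fin s → ℕ) (n : ℕ) :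
    (QQ s (zext a) (fun j => (h j : ℤ)) n).re = (cubeProd a h n).re := by
  have key : ∀ k, zext a ((n : ℤ) + (k : ℕ)) = a (n + k) := by
    intro k; unfold zext; congr 1
  rw [QQ_prod]
  simp only [key]
  rcases Nat.mod_two_eq_zero_or_one s with h0 | h0
  · congr 1
    unfold cubeProd
    refine Finset.prod_congr rfl fun ε _ => ?_
    have : (s + (Finset.univ.filter fun j => ε j = true).card) % 2 =
      (Finset.univ.filter fun j => ε j = true).card % 2 := by omega
    rw [this]
  · rw [← Complex.conj_re]
    congr 1
    unfold cubeProd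
    rw [map_prod]
    refine Finset.prod_congr rfl fun ε _ => ?_
    by_cases h1 : (Finset.univ.filter fun j => ε j = true).card % 2 = 1
    · have h2 : ¬ (s + (Finset.univ.filter fun j => ε j = true).card) % 2 = 1 := by omega
      simp [h1, h2]
    · have h2 : (s + (Finset.univ.filter fun j => ε j = true).card) % 2 = 1 := by omega
      simp [h1, h2]

lemma lim_re (I : ℕ → Finset ℕ) (s : ℕ) (a : ℕ → ℂ) (h : Fin s → ℕ) (z : ℂ)
    (hz : Tendsto (cesaroAvg I (cubeProd a h)) atTop (𝓝 z)) :
    Tendsto (avR I (fun n => (QQ s (zext a) (fun j => (h j : ℤ)) n).re)) atTop (𝓝 z.re) := by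
  refine ((Complex.continuous_re.tendsto z).comp hz).congr fun N => ?_
  simp only [Function.comp, cesaroAvg, avR, QQ_cube]
  have : (((I N).card : ℂ)⁻¹) = (((I N).card : ℝ)⁻¹ : ℝ) := by push_cast; rfl
  rw [this, Complex.re_ofReal_mul, Complex.re_sum]

lemma sum_pi_cons (s T : ℕ) (G : (Fin (s + 1) → ℕ) → ℝ) :
    ∑ h ∈ Fintype.piFinset (fun _ : Fin (s + 1) => Finset.Icc 1 T), G h =
      ∑ i ∈ range T, ∑ h ∈ Fintype.piFinset (fun _ : Fin s => Finset.Icc 1 T),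
        G (Fin.cons (i + 1) h) := by
  rw [← Finset.sum_product']
  symm
  refine Finset.sum_bij' (fun p _ => Fin.cons (p.1 + 1) p.2) (fun h _ => (h 0 - 1, Fin.tail h))
    ?_ ?_ ?_ ?_ ?_
  · rintro ⟨i, h⟩ hp
    simp only [mem_product, mem_range, Fintype.mem_piFinset, mem_Icc] at hp ⊢
    intro j
    refine Fin.cases ?_ (fun j => ?_) j
    · simp; omega
    · simpa using hp.2 j
  · intro h hp
    simp only [mem_product, mem_range, Fintype.mem_piFinset, mem_Icc] at hp ⊢
    refine ⟨by have := hp 0; omega, fun j => hp j.succ⟩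
  · rintro ⟨i, h⟩ hp
    simp
  · intro h hp
    simp only [Fintype.mem_piFinset, mem_Icc] at hp
    have : h 0 - 1 + 1 = h 0 := by have := hp 0; omega
    simp only [this, Fin.cons_self_tail]
  · rintro ⟨i, h⟩ hp
    rfl

lemma SS_DW (s T : ℕ) (r : (Fin s → ℤ) → ℝ) :
    SS s (fun _ => DW T) r = ((T : ℝ) ^ s)⁻¹ *
      ∑ h ∈ Fintype.piFinset (fun _ : Fin s => Finset.Icc 1 T), r (fun j => (h j : ℤ)) := by
  induction s with
  | zero =>
    simp [SS]
    congr 1; exact Subsingleton.elim _ _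
  | succ s ih =>
    rw [sum_pi_cons, SS, wav_DW, Dir]
    have e : (Fin.tail fun _ : Fin (s + 1) => DW T) = fun _ => DW T := rfl
    simp only [e, ih]
    rw [← Finset.mul_sum, ← mul_assoc, pow_succ', mul_inv]
    congr 1
    refine Finset.sum_congr rfl fun i _ => Finset.sum_congr rfl fun h _ => ?_
    congr 1
    funext j
    refine Fin.cases ?_ (fun j => ?_) j <;> simp

lemma VF_bound (s : ℕ) (hs : 1 ≤ s) (r : (Fin s → ℤ) → ℝ) (hr : Good s r) (U : ℝ)
    (hU : Tendsto (fun T : ℕ => ((T : ℝ) ^ s)⁻¹ *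
      ∑ h ∈ Fintype.piFinset (fun _ : Fin s => Finset.Icc 1 T), r (fun j => (h j : ℤ))) atTop (𝓝 U))
    (ε : ℝ) (hε : 0 < ε) : ∃ K : ℕ, 1 ≤ K ∧ VF s r (fun _ => K) ≤ U + ε := by
  obtain ⟨B, hB⟩ := hyb_limit s hs r hr
  have hBU : Tendsto (fun T : ℕ => ((T : ℝ) ^ s)⁻¹ *
      ∑ h ∈ Fintype.piFinset (fun _ : Fin s => Finset.Icc 1 T), r (fun j => (h j : ℤ))) atTop (𝓝 B) := by
    rw [Metric.tendsto_atTop]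
    intro δ hδ
    obtain ⟨X, _, hX⟩ := hB s le_rfl (δ / 2) (by positivity)
    refine ⟨X, fun T hT => ?_⟩
    have := hX (fun _ => T) (fun _ => hT)
    have e : hyb s s (fun _ => T) = fun _ => DW T := by
      funext j; simp [hyb]
    rw [e, SS_DW] at this
    rw [Real.dist_eq]
    linarith
  have e := tendsto_nhds_unique hBU hU
  obtain ⟨X, hX1, hX⟩ := hB 0 (Nat.zero_le _) ε hε
  refine ⟨X, hX1, ?_⟩
  have := hX (fun _ => X) (fun _ => le_rfl)
  have e2 : hyb s 0 (fun _ => X) = fun _ => FW X := by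
    funext j; simp [hyb]
  rw [e2] at this
  have := (abs_le.mp this).2
  unfold VF
  linarith

/-- The truncated shifted function on the integers. -/
noncomputable def fsh (a : ℕ → ℂ) (H : ℕ) (n : ℤ) : ℤ → ℂ :=
  fun m => if (0 : ℤ) ≤ m ∧ m < (H : ℤ) then zext a (n + 1 + m) else 0

lemma MM_pos (H s : ℕ) (hH : 1 ≤ H) : 0 < MM H s H :=
  lt_of_lt_of_le (by positivity) (MM_lower H s H le_rfl)

lemma UsShort_nonneg (s H : ℕ) (hs : 1 ≤ s) (b : ℕ → ℂ) : 0 ≤ UsShort s H b := by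
  obtain ⟨s, rfl⟩ := Nat.exists_eq_add_of_le' hs
  exact div_nonneg (gowersNorm_nonneg _ _ _) (gowersNorm_nonneg _ _ _)

lemma UsShort_pow (s H : ℕ) (hs : 1 ≤ s) (hH : 1 ≤ H) (a : ℕ → ℂ) (n : ℕ) :
    UsShort s H (fun m => a (n + m)) ^ 2 ^ s = (MM H s H)⁻¹ * (GG H s (fsh a H n)).re := by
  obtain ⟨s, rfl⟩ := Nat.exists_eq_add_of_le' hs
  have h1 := gowers_eq H hH s (fsh a H n) (by
    intro m hm
    simp only [mem_Ico] at hm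
    simp [fsh, hm]) (truncSeq (fun m => a (n + m)) H) (by
    intro m hm
    simp only [truncSeq, fsh, zext, Nat.cast_lt, Nat.cast_nonneg, true_and]
    split_ifs
    · congr 1; omega
    · rfl)
  have h0 := gowers_eq H hH s (fun m => if (0 : ℤ) ≤ m ∧ m < (H : ℤ) then 1 else 0) (by
    intro m hm
    simp only [mem_Ico] at hm
    simp [hm]) (truncSeq (fun _ => 1) H) (by
    intro m hm
    simp [truncSeq])
  rw [GG_ind H (s + 1) 0 H le_rfl le_rfl] at h0
  simp only [sub_zero, Int.toNat_natCast] at h0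
  have h0' : gowersNorm (2 * H) (s + 1) (truncSeq (fun _ => 1) H) ^ 2 ^ (s + 1) *
    ((2 * H : ℕ) : ℝ) ^ (s + 2) = MM H (s + 1) H := by exact_mod_cast h0
  have h1' : gowersNorm (2 * H) (s + 1) (truncSeq (fun m => a (n + m)) H) ^ 2 ^ (s + 1) *
    ((2 * H : ℕ) : ℝ) ^ (s + 2) = (GG H (s + 1) (fsh a H n)).re := by
    rw [← h1]
    rw [Complex.re_ofReal_mul]
    congr 1
    norm_cast
  have hM := MM_pos H (s + 1) hH
  have hL : (0 : ℝ) < ((2 * H : ℕ) : ℝ) ^ (s + 2) := by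
    have : 0 < 2 * H := by omega
    positivity
  rw [← h1', ← h0', UsShort, div_pow]
  rw [← h0'] at hM
  have : gowersNorm (2 * H) (s + 1) (truncSeq (fun _ => 1) H) ^ 2 ^ (s + 1) ≠ 0 := by
    intro h; rw [h] at hM; simp at hM
  field_simp

/-- The inner averages. -/
noncomputable def Avg (s : ℕ) (I : ℕ → Finset ℕ) (a : ℕ → ℂ) (H N : ℕ) : ℝ :=
  ((I N).card : ℝ)⁻¹ * ∑ n ∈ I N, UsShort s H (fun m => a (n + m))

lemma Avg_nonneg (s : ℕ) (hs : 1 ≤ s) (I : ℕ → Finset ℕ) (a : ℕ → ℂ) (H N : ℕ) :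
    0 ≤ Avg s I a H N :=
  mul_nonneg (by positivity) (Finset.sum_nonneg fun n _ => UsShort_nonneg s H hs _)

lemma Avg_pow (s : ℕ) (hs : 1 ≤ s) (I : ℕ → Finset ℕ) (a : ℕ → ℂ) (H N : ℕ) (hH : 1 ≤ H)
    (hN : 0 < (I N).card) :
    Avg s I a H N ^ 2 ^ s ≤ (MM H s H)⁻¹ * avR I (fun n => (GG H s (fsh a H n)).re) N := by
  have h := Real.pow_arith_mean_le_arith_mean_pow (I N) (fun _ => ((I N).card : ℝ)⁻¹)
    (fun n => UsShort s H (fun m => a (n + m))) (fun _ _ => by positivity)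
    (by simp; field_simp) (fun n _ => UsShort_nonneg s H hs _) (2 ^ s)
  simp only [UsShort_pow s H hs hH, ← Finset.mul_sum] at h
  unfold Avg avR
  refine h.trans (le_of_eq ?_)
  ring

lemma Avg_eventually
    (lo hi : ℕ → ℕ) (I : ℕ → Finset ℕ)
    (hI : ∀ N, I N = Finset.Icc (lo N) (hi N))
    (hIcard : Tendsto (fun N => (I N).card) atTop atTop)
    (a : ℕ → ℂ) (ha : ∀ n, ‖a n‖ ≤ 1)
    (s : ℕ) (hs : 1 ≤ s)
    (u : ℝ) (hu : 0 ≤ u)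
    (c : (Fin s → ℕ) → ℂ)
    (hc : ∀ h : Fin s → ℕ, Tendsto (cesaroAvg I (cubeProd a h)) atTop (𝓝 (c h)))
    (hlim : Tendsto (fun H : ℕ => ((H : ℂ) ^ s)⁻¹ *
        ∑ h ∈ Fintype.piFinset (fun _ : Fin s => Finset.Icc 1 H), c h) atTop
        (𝓝 ((u : ℂ) ^ (2 ^ s)))) (v : ℝ) (hv : u < v) :
    ∀ᶠ H in atTop, ∀ᶠ N in atTop, Avg s I a H N ≤ v := by
  have hz : ∀ n, ‖zext a n‖ ≤ 1 := fun n => ha _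
  set r : (Fin s → ℤ) → ℝ := fun h => (c fun j => (h j).natAbs).re with hrdef
  have hr : ∀ h, Tendsto (avR I (fun n => (QQ s (zext a) h n).re)) atTop (𝓝 (r h)) := fun h =>
    lim_int lo hi I hI hIcard s (zext a) hz (fun h => (c h).re)
      (fun h => lim_re I s a h _ (hc h)) h
  have hgood := good_of_lim lo hi I hI hIcard s (zext a) hz r hr
  have hU : Tendsto (fun T : ℕ => ((T : ℝ) ^ s)⁻¹ *
      ∑ h ∈ Fintype.piFinset (fun _ : Fin s => Finset.Icc 1 T), r (fun j => (h j : ℤ))) atTop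
      (𝓝 (u ^ 2 ^ s)) := by
    have := (Complex.continuous_re.tendsto _).comp hlim
    have e : ((u : ℂ) ^ (2 ^ s)).re = u ^ 2 ^ s := by norm_cast
    rw [e] at this
    refine this.congr fun T => ?_
    have e2 : ((T : ℂ) ^ s)⁻¹ = ((((T : ℝ) ^ s)⁻¹ : ℝ) : ℂ) := by push_cast; rfl
    simp only [Function.comp, e2, Complex.re_ofReal_mul, Complex.re_sum, hrdef, Int.natAbs_natCast]
  have hvp : u ^ 2 ^ s < v ^ 2 ^ s := pow_lt_pow_left₀ hv hu (by positivity)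
  obtain ⟨K, hK, hVF⟩ := VF_bound s hs r hgood _ hU ((v ^ 2 ^ s - u ^ 2 ^ s) / 2) (by linarith)
  have herr : Tendsto (fun H : ℕ => (8 * K * s * 2 ^ s * (s + 1).factorial : ℝ) * (H : ℝ)⁻¹) atTop (𝓝 0) := by
    have : Tendsto (fun H : ℕ => (H : ℝ)⁻¹) atTop (𝓝 0) := tendsto_inv_atTop_nhds_zero_nat
    simpa using this.const_mul (8 * K * s * 2 ^ s * (s + 1).factorial : ℝ)
  have herr' := herr.eventually_lt_const (show (0 : ℝ) < (v ^ 2 ^ s - u ^ 2 ^ s) / 2 by linarith)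
  filter_upwards [herr', eventually_ge_atTop 1] with H hH hH1
  have hM := MM_pos H s hH1
  have hTT : (MM H s H)⁻¹ * TT H s H r < v ^ 2 ^ s := by
    have h1 := TT_le H s H le_rfl r hgood K hK
    have h2 : (MM H s H)⁻¹ * (8 * K * s * (2 * H) ^ s) ≤
        (8 * K * s * 2 ^ s * (s + 1).factorial : ℝ) * (H : ℝ)⁻¹ := by
      have hHp : (0 : ℝ) < H := by exact_mod_cast hH1
      have h3 : (MM H s H)⁻¹ ≤ ((H : ℝ) ^ (s + 1) / (s + 1).factorial)⁻¹ :=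
        inv_anti₀ (by positivity) (MM_lower H s H le_rfl)
      refine (mul_le_mul_of_nonneg_right h3 (by positivity)).trans (le_of_eq ?_)
      rw [mul_pow, pow_succ]
      field_simp
    rw [inv_mul_lt_iff₀ hM]
    rw [inv_mul_le_iff₀ hM] at h2
    have h4 := mul_le_mul_of_nonneg_left hVF hM.le
    have h5 := mul_lt_mul_of_pos_left hH hM
    nlinarith
  have hG := lim_GG lo hi I hI hIcard H s (zext a) hz r hr 0 H le_rfl le_rfl
  simp only [sub_zero, Int.toNat_natCast] at hG
  have hG' := (hG.const_mul (MM H s H)⁻¹).eventually_lt_const hTT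
  filter_upwards [hG', hIcard.eventually_ge_atTop 1] with N hN hN1
  have h6 := Avg_pow s hs I a H N hH1 hN1
  have h7 : Avg s I a H N ^ 2 ^ s < v ^ 2 ^ s := lt_of_le_of_lt h6 hN
  exact (lt_of_pow_lt_pow_left₀ _ (hu.trans hv.le) h7).le

theorem main_le
    (lo hi : ℕ → ℕ) (I : ℕ → Finset ℕ)
    (hI : ∀ N, I N = Finset.Icc (lo N) (hi N))
    (hIcard : Tendsto (fun N => (I N).card) atTop atTop)
    (a : ℕ → ℂ) (ha : ∀ n, ‖a n‖ ≤ 1)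
    (s : ℕ) (hs : 1 ≤ s)
    (u : ℝ) (hu : 0 ≤ u)
    (c : (Fin s → ℕ) → ℂ)
    (hc : ∀ h : Fin s → ℕ, Tendsto (cesaroAvg I (cubeProd a h)) atTop (𝓝 (c h)))
    (hlim : Tendsto (fun H : ℕ => ((H : ℂ) ^ s)⁻¹ *
        ∑ h ∈ Fintype.piFinset (fun _ : Fin s => Finset.Icc 1 H), c h) atTop
        (𝓝 ((u : ℂ) ^ (2 ^ s)))) :
    limsup (fun H : ℕ => limsup (fun N : ℕ => Avg s I a H N) atTop) atTop ≤ 4 * u := by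
  refine (le_of_forall_gt_imp_ge_of_dense fun v hv => ?_ : _ ≤ u).trans (by linarith)
  have hev := Avg_eventually lo hi I hI hIcard a ha s hs u hu c hc hlim v hv
  have hcob : ∀ H, IsCoboundedUnder (· ≤ ·) atTop (fun N => Avg s I a H N) := fun H =>
    IsBoundedUnder.isCoboundedUnder_le
      (isBoundedUnder_of ⟨0, fun N => Avg_nonneg s hs I a H N⟩)
  have hge : ∀ᶠ H in atTop, 0 ≤ limsup (fun N : ℕ => Avg s I a H N) atTop := by
    filter_upwards [hev] with H hH
    exact le_limsup_of_frequently_le (Frequently.of_forall fun N => Avg_nonneg s hs I a H N)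
      ⟨v, by simpa using hH⟩
  refine limsup_le_of_le ?_ ?_
  · exact IsBoundedUnder.isCoboundedUnder_le ⟨0, by simpa using hge⟩
  · filter_upwards [hev] with H hH
    exact limsup_le_of_le (hcob H) hH

/-- Proposition 2.5 of the paper (Cesàro case): if `a` is bounded by `1` and admits
correlations for Cesàro averages on intervals `I` with `|I_N| → ∞`, then
`‖a‖_{U^s_*(I)} ≤ 4 ‖a‖_{U^s(I)}`.  The seminorm `u = ‖a‖_{U^s(I)}` is characterized by
`u^{2^s} = lim_{H} 𝔼_{h∈[H]^s} (lim_N 𝔼_{n∈I_N} ∏_{ε} C^{|ε|} a(n+ε·h))`, and the star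
seminorm is `limsup_H limsup_N 𝔼_{n∈I_N} ‖S_n a‖_{U^s[H]}`. -/
theorem star_seminorm_le_four_mul_uniformity_seminorm
    (lo hi : ℕ → ℕ) (I : ℕ → Finset ℕ)
    (hI : ∀ N, I N = Finset.Icc (lo N) (hi N))
    (hIcard : Tendsto (fun N => (I N).card) atTop atTop)
    (a : ℕ → ℂ) (ha : ∀ n, ‖a n‖ ≤ 1)
    (s : ℕ) (hs : 1 ≤ s)
    (hcorr : ∀ (k : ℕ) (sh : Fin k → ℕ) (cj : Fin k → Bool),
      ∃ L : ℂ, Tendsto (cesaroAvg I fun m => ∏ j,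
        if cj j then (starRingEnd ℂ) (a (m + sh j)) else a (m + sh j)) atTop (𝓝 L))
    (u : ℝ) (hu : 0 ≤ u)
    (c : (Fin s → ℕ) → ℂ)
    (hc : ∀ h : Fin s → ℕ, Tendsto (cesaroAvg I (cubeProd a h)) atTop (𝓝 (c h)))
    (hlim : Tendsto (fun H : ℕ => ((H : ℂ) ^ s)⁻¹ *
        ∑ h ∈ Fintype.piFinset (fun _ : Fin s => Finset.Icc 1 H), c h) atTop
        (𝓝 ((u : ℂ) ^ (2 ^ s)))) :
    limsup (fun H : ℕ => limsup (fun N : ℕ =>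
        ((I N).card : ℝ)⁻¹ * ∑ n ∈ I N, UsShort s H (fun m => a (n + m))) atTop) atTop
      ≤ 4 * u := by
  exact main_le lo hi I hI hIcard a ha s hs u hu c hc hlim
end
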